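/- arXiv:1911.11604 — 2 statements merged into one kernel-verified Lean document; each statement's English description precedes it below -/
import Mathlib

section
/- Let A ∈ F{x,y} be irreducible and let (u, P₁, Q₁, P₂, Q₂) be a proper differential rational parametrization of the differential curve (C,A) with mᵢ := max(ord Pᵢ, ord Qᵢ) ≥ 0 for i = 1, 2. Then m₁ = ord_y(A) and m₂ = ord_x(A). -/
/-!
The order of `w ∈ E` in `u` is the least `m` such that `w` is algebraic over `F(u, …, D^m u)`.
In characteristic zero each differentiation raises it by exactly one (`order_step`), and a reduced
fraction `P(u)/Q(u)` has order `max (ord P) (ord Q)` (`order_fraction`). So `D^k η₁` and `D^k η₂`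
have orders `m₁ + k` and `m₂ + k`.

Write `p = ord_x A` and `q = ord_y A`. By Ritt's division property (`dvd_of_mem_satSet`), an element
of `sat(A)` of order at most `p` in `x` is a multiple of `A`. Hence `η₁, …, D^{p-1}η₁` together with
all derivatives of `η₂` are algebraically independent, and `∂A/∂v` does not vanish at `(η₁, η₂)` for
any variable `v` of `A`. Two counts now give the theorem.

* `p = m₂` (`ordIdx_zero_eq`): `A(η) = 0` makes all derivatives of `η₁` algebraic over the
  independent family above, so this family is a transcendence basis of `F⟨η₁, η₂⟩`, which is `F⟨u⟩`
  by properness. Another basis is `u, …, D^{m₂-1}u` with all derivatives of `η₂`. Both contain the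
  infinite family of derivatives of `η₂`; by the exchange property for bases of the matroid of
  algebraic independence, the remaining parts, of sizes `p` and `m₂`, are equally large.
* `m₁ + p = m₂ + q` (`exists_order_le`): the highest order among the terms of the relation
  `A(η) = 0` is attained at least twice, since otherwise the unique term of highest order would be
  algebraic over elements of lower order.
-/

open MvPolynomial

noncomputable section

namespace DiffCurve

variable (F : Type*) {E : Type*} [Field F] [Field E] [Algebra F E]

/-- `F⟨S⟩`: the intermediate field of `E/F` generated by all iterated derivatives of
elements of `S`. -/
def genDF (D : Derivation ℤ E E) (S : Set E) : IntermediateField F E :=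
  IntermediateField.adjoin F {x | ∃ s ∈ S, ∃ k : ℕ, (⇑D)^[k] s = x}

/-- `u` is differentially transcendental over `F`. -/
def DiffTrans (D : Derivation ℤ E E) (u : E) : Prop :=
  AlgebraicIndependent F (fun k : ℕ => (⇑D)^[k] u)

/-- Evaluation of `P ∈ F{u}` at `v`: the `F`-algebra map sending `u_k ↦ D^k v`. -/
def evalD (D : Derivation ℤ E E) (v : E) : MvPolynomial ℕ F →ₐ[F] E :=
  aeval fun k => (⇑D)^[k] v

/-- Evaluation of `A ∈ F{x,y}` at `(η₁, η₂)`: `x_k ↦ D^k η₁`, `y_k ↦ D^k η₂`. -/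
def evalD2 (D : Derivation ℤ E E) (η₁ η₂ : E) : MvPolynomial (Fin 2 × ℕ) F →ₐ[F] E :=
  aeval fun p => (⇑D)^[p.2] (if p.1 = 0 then η₁ else η₂)

variable {F}

/-- The order of `P ∈ F{u}`: the largest `k` such that `u_k` occurs (`⊥` if none). -/
def ordU (P : MvPolynomial ℕ F) : WithBot ℕ := P.vars.max

/-- `ord_x` (for `i = 0`) resp. `ord_y` (for `i = 1`) of `A ∈ F{x,y}`. -/
def ordIdx (i : Fin 2) (A : MvPolynomial (Fin 2 × ℕ) F) : WithBot ℕ :=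
  ((A.vars.filter fun v => v.1 = i).image Prod.snd).max

/-- `ord(A) = max(ord_x A, ord_y A)`. -/
def ordXY (A : MvPolynomial (Fin 2 × ℕ) F) : WithBot ℕ :=
  max (ordIdx 0 A) (ordIdx 1 A)

/-- The separant of `A` w.r.t. `x`: `∂A/∂x_s` where `s = ord_x A` (junk value `1` if
`ord_x A = ⊥`). -/
def sepX (A : MvPolynomial (Fin 2 × ℕ) F) : MvPolynomial (Fin 2 × ℕ) F :=
  WithBot.recBotCoe 1 (fun s => pderiv ((0 : Fin 2), s) A) (ordIdx 0 A)

/-- The differential ideal `[A]` generated by `A`, for a derivation `d`. -/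
def diffIdeal {R : Type*} [CommRing R] (d : Derivation ℤ R R) (A : R) : Ideal R :=
  Ideal.span (Set.range fun k : ℕ => (⇑d)^[k] A)

/-- The general component `sat(A) = [A] : S_A^∞` (as a set). -/
def satSet (dxy : Derivation ℤ (MvPolynomial (Fin 2 × ℕ) F) (MvPolynomial (Fin 2 × ℕ) F))
    (A : MvPolynomial (Fin 2 × ℕ) F) : Set (MvPolynomial (Fin 2 × ℕ) F) :=
  {f | ∃ m : ℕ, sepX A ^ m * f ∈ diffIdeal dxy A}

variable (F)

/-- `(u, P₁, Q₁, P₂, Q₂)` is a differential rational parametrization of the differential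
curve `(C, A)`. -/
def IsParam (D : Derivation ℤ E E)
    (dxy : Derivation ℤ (MvPolynomial (Fin 2 × ℕ) F) (MvPolynomial (Fin 2 × ℕ) F))
    (A : MvPolynomial (Fin 2 × ℕ) F) (u : E) (P₁ Q₁ P₂ Q₂ : MvPolynomial ℕ F) : Prop :=
  DiffTrans F D u ∧
  P₁ ≠ 0 ∧ Q₁ ≠ 0 ∧ IsRelPrime P₁ Q₁ ∧ P₂ ≠ 0 ∧ Q₂ ≠ 0 ∧ IsRelPrime P₂ Q₂ ∧
  ¬ (evalD F D u P₁ / evalD F D u Q₁ ∈ (algebraMap F E).range ∧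
     evalD F D u P₂ / evalD F D u Q₂ ∈ (algebraMap F E).range) ∧
  {B : MvPolynomial (Fin 2 × ℕ) F |
      evalD2 F D (evalD F D u P₁ / evalD F D u Q₁) (evalD F D u P₂ / evalD F D u Q₂) B = 0}
    = satSet dxy A

/-- A proper differential rational parametrization: additionally
`F⟨η₁, η₂⟩ = F⟨u⟩`. -/
def IsProperParam (D : Derivation ℤ E E)
    (dxy : Derivation ℤ (MvPolynomial (Fin 2 × ℕ) F) (MvPolynomial (Fin 2 × ℕ) F))
    (A : MvPolynomial (Fin 2 × ℕ) F) (u : E) (P₁ Q₁ P₂ Q₂ : MvPolynomial ℕ F) : Prop :=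
  IsParam F D dxy A u P₁ Q₁ P₂ Q₂ ∧
  genDF F D {evalD F D u P₁ / evalD F D u Q₁, evalD F D u P₂ / evalD F D u Q₂}
    = genDF F D {u}

/-- The projection `F{x,y,u} → F{x,y}` sending `u_k ↦ 0` and keeping `x_k`, `y_k`. -/
def projXY : MvPolynomial (Fin 3 × ℕ) F →ₐ[F] MvPolynomial (Fin 2 × ℕ) F :=
  aeval fun p => if h : (p.1 : ℕ) < 2 then X ((⟨p.1, h⟩ : Fin 2), p.2) else 0

/-- The `i`-th row polynomial of the differential resultant matrix:
`d^{m₂}f₁, …, f₁, d^{m₁}f₂, …, f₂` where `f₁ = x₀·Q₁ − P₁`, `f₂ = y₀·Q₂ − P₂`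
in `F{x,y,u}`. -/
def resRow (dxyu : Derivation ℤ (MvPolynomial (Fin 3 × ℕ) F) (MvPolynomial (Fin 3 × ℕ) F))
    (P₁ Q₁ P₂ Q₂ : MvPolynomial ℕ F) (m₁ m₂ : ℕ) (i : ℕ) : MvPolynomial (Fin 3 × ℕ) F :=
  if i ≤ m₂ then
    (⇑dxyu)^[m₂ - i] (X ((0 : Fin 3), 0) * rename (fun k => ((2 : Fin 3), k)) Q₁
      - rename (fun k => ((2 : Fin 3), k)) P₁)
  else
    (⇑dxyu)^[m₁ + m₂ + 1 - i] (X ((1 : Fin 3), 0) * rename (fun k => ((2 : Fin 3), k)) Q₂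
      - rename (fun k => ((2 : Fin 3), k)) P₂)

/-- The differential resultant `δ-Res(f₁, f₂) ∈ F{x,y}`: the determinant of the
`(m₁+m₂+2) × (m₁+m₂+2)` matrix whose rows are the coefficient vectors of
`d^{m₂}f₁, …, f₁, d^{m₁}f₂, …, f₂` w.r.t. `u_{m₁+m₂}, …, u_1, u_0, 1`. -/
def deltaRes (dxyu : Derivation ℤ (MvPolynomial (Fin 3 × ℕ) F) (MvPolynomial (Fin 3 × ℕ) F))
    (P₁ Q₁ P₂ Q₂ : MvPolynomial ℕ F) (m₁ m₂ : ℕ) : MvPolynomial (Fin 2 × ℕ) F :=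
  Matrix.det (Matrix.of fun i j : Fin (m₁ + m₂ + 2) =>
    if (j : ℕ) ≤ m₁ + m₂ then
      projXY F (pderiv ((2 : Fin 3), m₁ + m₂ - (j : ℕ)) (resRow F dxyu P₁ Q₁ P₂ Q₂ m₁ m₂ i))
    else projXY F (resRow F dxyu P₁ Q₁ P₂ Q₂ m₁ m₂ i))

/-- A linear homogeneous differential polynomial `L = Σ_k a_k u_k` in `F{u}`. -/
def IsLinHom {F : Type*} [Field F] (L : MvPolynomial ℕ F) : Prop :=
  ∀ m ∈ L.support, ∃ k : ℕ, m = Finsupp.single k 1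

/-! ### The closure operator of algebraic independence -/

section Closure

variable {F}

variable (F) in
/-- The field of all elements of `E` algebraic over `F(S)`. -/
def algCl (S : Set E) : IntermediateField F E :=
  (algebraicClosure (IntermediateField.adjoin F S) E).restrictScalars F

lemma vars_pderiv_subset {σ : Type*} (v : σ) (B : MvPolynomial σ F) :
    (pderiv v B).vars ⊆ B.vars := by
  intro i hi
  rw [mem_vars_iff_mem_support] at hi ⊢
  obtain ⟨d, hd, hi⟩ := hi
  rw [mem_support_iff, coeff_pderiv] at hd
  refine ⟨d + Finsupp.single v 1, mem_support_iff.2 (left_ne_zero_of_mul hd), ?_⟩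
  rw [Finsupp.mem_support_iff] at hi ⊢
  rw [Finsupp.add_apply]; omega

lemma mem_algCl {S : Set E} {x : E} :
    x ∈ algCl F S ↔ IsAlgebraic (IntermediateField.adjoin F S) x := by
  rw [algCl, IntermediateField.mem_restrictScalars, mem_algebraicClosure_iff]

lemma mem_algCl' {S : Set E} {x : E} :
    x ∈ algCl F S ↔ IsAlgebraic (Algebra.adjoin F S) x := by
  rw [mem_algCl, IntermediateField.isAlgebraic_adjoin_iff]

/-- `algCl` is the closure operator of the matroid of algebraic independence, which makes the
exchange property and the equicardinality of bases available. -/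
lemma coe_algCl (S : Set E) :
    (algCl F S : Set E) = (AlgebraicIndependent.matroid F E).closure S := by
  rw [AlgebraicIndependent.matroid_closure_eq]
  ext x
  rw [SetLike.mem_coe, SetLike.mem_coe, mem_algCl', Subalgebra.mem_algebraicClosure]

lemma mem_algCl_iff_closure {S : Set E} {x : E} :
    x ∈ algCl F S ↔ x ∈ (AlgebraicIndependent.matroid F E).closure S := by
  rw [← coe_algCl, SetLike.mem_coe]

lemma subset_algCl (S : Set E) : S ⊆ algCl F S := by
  rw [coe_algCl]
  exact Matroid.subset_closure _ _ (Set.subset_univ _)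

lemma algCl_le {S W : Set E} (h : S ⊆ algCl F W) : algCl F S ≤ algCl F W := by
  intro x hx
  rw [mem_algCl_iff_closure] at *
  rw [coe_algCl] at h
  exact Matroid.closure_subset_closure_of_subset_closure h hx

lemma algCl_mono {S W : Set E} (h : S ⊆ W) : algCl F S ≤ algCl F W :=
  algCl_le (h.trans (subset_algCl W))

lemma exchange {S : Set E} {x y : E} (hx : x ∈ algCl F (insert y S)) (hx' : x ∉ algCl F S) :
    y ∈ algCl F (insert x S) := by
  rw [mem_algCl_iff_closure] at *
  exact Matroid.mem_closure_insert hx' hx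

/-- If `D` maps the generators `S` of `algCl F S` into the algebraically closed field `algCl F W`,
then it maps all of `algCl F S` there: in characteristic zero, differentiating the minimal
polynomial of `x` expresses `D x` rationally in terms of `x` and known elements. -/
lemma map_algCl [CharZero F] {δF : Derivation ℤ F F} {D : Derivation ℤ E E}
    (hD : ∀ a : F, D (algebraMap F E a) = algebraMap F E (δF a)) {S W : Set E}
    (hS : ∀ s ∈ S, s ∈ algCl F W) (hDS : ∀ s ∈ S, D s ∈ algCl F W) {x : E}
    (hx : x ∈ algCl F S) : D x ∈ algCl F W := by
  have hxW : x ∈ algCl F W := algCl_le hS hx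
  let K : IntermediateField F E :=
    { carrier := {y | y ∈ algCl F W ∧ D y ∈ algCl F W}
      mul_mem' := fun {a b} ha hb => ⟨mul_mem ha.1 hb.1, by
        rw [D.leibniz, smul_eq_mul, smul_eq_mul]
        exact add_mem (mul_mem ha.1 hb.2) (mul_mem hb.1 ha.2)⟩
      add_mem' := fun {a b} ha hb => ⟨add_mem ha.1 hb.1, by
        rw [map_add]; exact add_mem ha.2 hb.2⟩
      algebraMap_mem' := fun r => ⟨(algCl F W).algebraMap_mem r, by
        rw [hD]; exact (algCl F W).algebraMap_mem _⟩
      inv_mem' := fun a ha => ⟨inv_mem ha.1, by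
        rw [Derivation.leibniz_inv, smul_eq_mul]
        exact mul_mem (neg_mem (pow_mem (inv_mem ha.1) 2)) ha.2⟩ }
  have hSK : IntermediateField.adjoin F S ≤ K :=
    IntermediateField.adjoin_le_iff.2 fun s hs => ⟨hS s hs, hDS s hs⟩
  have hxK : IsIntegral K x := by
    have h1 := mem_algCl.1 hx
    let : Algebra (IntermediateField.adjoin F S) K :=
      (IntermediateField.inclusion hSK).toRingHom.toAlgebra
    have : IsScalarTower (IntermediateField.adjoin F S) K E :=
      IsScalarTower.of_algebraMap_eq fun _ => rfl
    exact (h1.tower_top K).isIntegral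
  have key : ∀ q : Polynomial K,
      D (Polynomial.aeval x q) - Polynomial.aeval x q.derivative * D x ∈ algCl F W := by
    intro q
    induction q using Polynomial.induction_on' with
    | add p q hp hq =>
      have := add_mem hp hq
      convert this using 1
      simp only [map_add]
      ring
    | monomial n a =>
      have h2 : D (x ^ n) = n * x ^ (n - 1) * D x := by
        rw [D.leibniz_pow]; simp [mul_assoc]
      rw [Polynomial.derivative_monomial, Polynomial.aeval_monomial, Polynomial.aeval_monomial,
        D.leibniz, h2]
      have h3 : x ^ n * D (algebraMap K E a) ∈ algCl F W :=
        mul_mem (pow_mem hxW n) a.2.2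
      convert h3 using 1
      simp only [smul_eq_mul, map_mul, map_natCast]
      ring
  have h4 := key (minpoly K x)
  rw [minpoly.aeval, map_zero, zero_sub] at h4
  have hne : Polynomial.aeval x (minpoly K x).derivative ≠ 0 :=
    (minpoly.irreducible hxK).separable.aeval_derivative_ne_zero (minpoly.aeval K x)
  have hmem : Polynomial.aeval x (minpoly K x).derivative ∈ algCl F W := by
    rw [Polynomial.aeval_eq_sum_range]
    refine sum_mem fun i _ => ?_
    rw [Algebra.smul_def]
    exact mul_mem (Subtype.prop ((minpoly K x).derivative.coeff i)).1 (pow_mem hxW i)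
  have h5 := mul_mem (inv_mem hmem) (neg_mem h4)
  rwa [neg_neg, inv_mul_cancel_left₀ hne] at h5

lemma iterate_mem_algCl [CharZero F] {δF : Derivation ℤ F F} {D : Derivation ℤ E E}
    (hD : ∀ a : F, D (algebraMap F E a) = algebraMap F E (δF a)) {S : Set E}
    (hDS : ∀ s ∈ S, D s ∈ algCl F S) {x : E} (hx : x ∈ algCl F S) (k : ℕ) :
    (⇑D)^[k] x ∈ algCl F S := by
  induction k with
  | zero => exact hx
  | succ k ih =>
    rw [Function.iterate_succ_apply']
    exact map_algCl hD (subset_algCl S) hDS ih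

/-- A relation `B(g) = 0` in which `∂B/∂X_v` does not vanish at `g` makes `g v` algebraic over the
other coordinates occurring in `B`. -/
lemma mem_algCl_of_pderiv {σ : Type*} {g : σ → E} {B : MvPolynomial σ F} {v : σ} {S : Set E}
    (h0 : aeval g B = 0) (h1 : aeval g (pderiv v B) ≠ 0)
    (hS : ∀ w ∈ B.vars, w ≠ v → g w ∈ algCl F S) : g v ∈ algCl F S := by
  classical
  -- `f` is `B` with all coordinates except `v` specialised along `g`.
  let g' : σ → Polynomial (algCl F S) := fun w => if w = v then Polynomial.X else
    if h : g w ∈ algCl F S then Polynomial.C ⟨g w, h⟩ else 0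
  let f : Polynomial (algCl F S) := aeval g' B
  have hev : ∀ P : MvPolynomial σ F, P.vars ⊆ B.vars →
      Polynomial.aeval (g v) (aeval g' P) = aeval g P := by
    intro P hP
    have := hom_congr_vars (p₁ := P) (p₂ := P)
      (f₁ := ((Polynomial.aeval (g v)).restrictScalars F).comp
        (aeval g' : MvPolynomial σ F →ₐ[F] Polynomial (algCl F S)) |>.toRingHom)
      (f₂ := (aeval g : MvPolynomial σ F →ₐ[F] E).toRingHom) ?_ ?_ rfl
    · simpa using this
    · ext a; simp [← IsScalarTower.algebraMap_apply]
    · intro i hi _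
      by_cases hiv : i = v
      · subst hiv; simp [g']
      · have := hS i (hP hi) hiv
        simp [g', hiv, this]
  have hder : ∀ P : MvPolynomial σ F,
      Polynomial.derivative (aeval g' P) = aeval g' (pderiv v P) := by
    intro P
    induction P using MvPolynomial.induction_on with
    | C a =>
      rw [pderiv_C, map_zero, ← MvPolynomial.algebraMap_eq, AlgHom.commutes,
        IsScalarTower.algebraMap_apply F (algCl F S) (Polynomial (algCl F S)),
        Polynomial.algebraMap_eq, Polynomial.derivative_C]
    | add p q hp hq => simp [hp, hq]
    | mul_X p w hp =>
      by_cases hw : w = v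
      · subst hw
        simp [hp, Derivation.leibniz, g']
        ring
      · simp only [map_mul, aeval_X, Polynomial.derivative_mul, hp, pderiv_mul,
          pderiv_X_of_ne hw, mul_zero, add_zero]
        by_cases hg : g w ∈ algCl F S <;> simp [g', hw, hg]
  have hvars : (pderiv v B).vars ⊆ B.vars := vars_pderiv_subset v B
  have hf : f ≠ 0 := by
    intro hf
    apply h1
    rw [← hev _ hvars, ← hder]
    change Polynomial.aeval (g v) (Polynomial.derivative f) = 0
    rw [hf]; simp
  have halg : IsAlgebraic (algCl F S) (g v) := ⟨f, hf, by rw [← h0]; exact hev B subset_rfl⟩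
  have halg2 : IsAlgebraic (IntermediateField.adjoin F S) (g v) := by
    have : IsAlgebraic (algebraicClosure (IntermediateField.adjoin F S) E) (g v) := halg
    exact IsAlgebraic.restrictScalars _ this
  exact mem_algCl.2 halg2

end Closure

/-! ### Ritt's division property of the general component -/

section Poly

variable {F}

lemma vars_subset_of_dvd {σ : Type*} {A B : MvPolynomial σ F} (h : A ∣ B) (hB : B ≠ 0) :
    A.vars ⊆ B.vars := by
  obtain ⟨c, rfl⟩ := h
  intro i hi
  rw [mem_vars_iff_degreeOf_ne_zero] at *
  rw [degreeOf_mul_eq (left_ne_zero_of_mul hB) (right_ne_zero_of_mul hB)]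
  omega

lemma pderiv_ne_zero [CharZero F] {σ : Type*} {A : MvPolynomial σ F} {v : σ} (hv : v ∈ A.vars) :
    pderiv v A ≠ 0 := by
  rw [mem_vars_iff_mem_support] at hv
  obtain ⟨d, hd, hdv⟩ := hv
  rw [Finsupp.mem_support_iff] at hdv
  intro h
  have h1 := coeff_pderiv (i := v) A (d - Finsupp.single v 1)
  rw [h, coeff_zero, tsub_add_cancel_of_le] at h1
  · rcases mul_eq_zero.1 h1.symm with h2 | h2
    · exact (mem_support_iff.1 hd) h2
    · exact Nat.cast_add_one_ne_zero _ h2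
  · rw [Finsupp.single_le_iff]; omega

lemma not_dvd_pderiv [CharZero F] {σ : Type*} {A : MvPolynomial σ F} {v : σ} (hv : v ∈ A.vars) :
    ¬ A ∣ pderiv v A := by
  intro h
  obtain ⟨c, hc⟩ := h
  have h0 := pderiv_ne_zero hv
  have hA : A ≠ 0 := by rintro rfl; simp at hv
  have hdeg : degreeOf v (pderiv v A) < degreeOf v A := by
    have hpos : 0 < degreeOf v A := Nat.pos_of_ne_zero (mem_vars_iff_degreeOf_ne_zero.1 hv)
    rw [degreeOf_lt_iff hpos]
    intro m hm
    rw [mem_support_iff, coeff_pderiv] at hm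
    have h2 := monomial_le_degreeOf v (mem_support_iff.2 (left_ne_zero_of_mul hm))
    rw [Finsupp.add_apply, Finsupp.single_eq_same] at h2
    omega
  rw [hc] at h0
  rw [hc, degreeOf_mul_eq hA (right_ne_zero_of_mul h0)] at hdeg
  omega

variable (F) in
/-- The polynomials in `F{x,y}` of order `< n` in `x`, without restriction on `y`. -/
def below (n : ℕ) : Subalgebra F (MvPolynomial (Fin 2 × ℕ) F) :=
  supported F {v | v.1 = 0 → v.2 < n}

lemma X_mem_below {n : ℕ} {v : Fin 2 × ℕ} (h : v.1 = 0 → v.2 < n) : X v ∈ below F n :=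
  X_mem_supported.2 h

lemma C_mem_below (n : ℕ) (a : F) : C a ∈ below F n := (below F n).algebraMap_mem a

lemma below_mono {m n : ℕ} (h : m ≤ n) : below F m ≤ below F n :=
  supported_mono fun _ hv hv0 => (hv hv0).trans_le h

lemma mem_below {n : ℕ} {B : MvPolynomial (Fin 2 × ℕ) F} :
    B ∈ below F n ↔ ∀ v ∈ B.vars, v.1 = 0 → v.2 < n := by
  rw [below, mem_supported]; rfl

lemma pderiv_mem_below {n : ℕ} {B : MvPolynomial (Fin 2 × ℕ) F} (v : Fin 2 × ℕ)
    (hB : B ∈ below F n) : pderiv v B ∈ below F n :=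
  mem_below.2 fun w hw => mem_below.1 hB w (vars_pderiv_subset v B hw)

variable {δF : Derivation ℤ F F}
  {dxy : Derivation ℤ (MvPolynomial (Fin 2 × ℕ) F) (MvPolynomial (Fin 2 × ℕ) F)}

lemma d_mem_below (hdxyC : ∀ a : F, dxy (C a) = C (δF a))
    (hdxyX : ∀ (i : Fin 2) (k : ℕ), dxy (X (i, k)) = X (i, k + 1))
    {n : ℕ} {B : MvPolynomial (Fin 2 × ℕ) F} (hB : B ∈ below F n) : dxy B ∈ below F (n + 1) := by
  have hle : below F n ≤ below F (n + 1) := below_mono n.le_succ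
  unfold below at hB
  rw [supported_eq_adjoin_X] at hB
  induction hB using Algebra.adjoin_induction with
  | mem x hx =>
    obtain ⟨⟨i, k⟩, hv, rfl⟩ := hx
    rw [hdxyX]
    exact X_mem_below fun h => Nat.succ_lt_succ (hv h)
  | algebraMap r => rw [MvPolynomial.algebraMap_eq, hdxyC]; exact C_mem_below _ _
  | add x y _ _ hx hy => rw [map_add]; exact add_mem hx hy
  | mul x y hx' hy' hx hy =>
    rw [dxy.leibniz, smul_eq_mul, smul_eq_mul]
    exact add_mem (mul_mem (hle hx') hy) (mul_mem (hle hy') hx)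

/-- `dB` is linear in the newly created variable `x_{p+1}`, with coefficient `∂B/∂x_p`. -/
lemma d_sub_mem_below (hdxyC : ∀ a : F, dxy (C a) = C (δF a))
    (hdxyX : ∀ (i : Fin 2) (k : ℕ), dxy (X (i, k)) = X (i, k + 1))
    {p : ℕ} {B : MvPolynomial (Fin 2 × ℕ) F} (hB : B ∈ below F (p + 1)) :
    dxy B - pderiv ((0 : Fin 2), p) B * X ((0 : Fin 2), p + 1) ∈ below F (p + 1) := by
  unfold below at hB
  rw [supported_eq_adjoin_X] at hB
  induction hB using Algebra.adjoin_induction with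
  | mem x hx =>
    obtain ⟨⟨i, k⟩, hv, rfl⟩ := hx
    rw [hdxyX]
    by_cases h : ((i, k) : Fin 2 × ℕ) = (0, p)
    · obtain ⟨rfl, rfl⟩ := Prod.mk.inj h
      rw [pderiv_X_self, one_mul, sub_self]
      exact zero_mem _
    · rw [pderiv_X_of_ne h, zero_mul, sub_zero]
      refine X_mem_below fun hi => ?_
      have h1 : k < p + 1 := hv hi
      have h2 : k ≠ p := fun hk => h (Prod.ext hi hk)
      change k + 1 < p + 1
      omega
  | algebraMap r =>
    rw [MvPolynomial.algebraMap_eq, hdxyC, pderiv_C, zero_mul, sub_zero]; exact C_mem_below _ _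
  | add x y _ _ hx hy =>
    convert add_mem hx hy using 1
    simp only [map_add]; ring
  | mul x y hx' hy' hx hy =>
    replace hx' : x ∈ below F (p + 1) := hx'
    replace hy' : y ∈ below F (p + 1) := hy'
    convert add_mem (mul_mem hx' hy) (mul_mem hy' hx) using 1
    rw [dxy.leibniz, (pderiv ((0 : Fin 2), p)).leibniz]
    simp only [smul_eq_mul]; ring

/-- For `k ≥ 1`, the derivative `d^k A` is linear in its leading variable `x_{p+k}`, with the
separant of `A` as coefficient. -/
lemma iterate_d_sub_mem_below (hdxyC : ∀ a : F, dxy (C a) = C (δF a))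
    (hdxyX : ∀ (i : Fin 2) (k : ℕ), dxy (X (i, k)) = X (i, k + 1))
    {p : ℕ} {A : MvPolynomial (Fin 2 × ℕ) F} (hA : A ∈ below F (p + 1)) (k : ℕ) :
    (⇑dxy)^[k + 1] A - pderiv ((0 : Fin 2), p) A * X ((0 : Fin 2), p + (k + 1))
      ∈ below F (p + (k + 1)) := by
  induction k with
  | zero => exact d_sub_mem_below hdxyC hdxyX hA
  | succ k ih =>
    have h1 := d_mem_below hdxyC hdxyX ih
    have h2 : dxy (pderiv ((0 : Fin 2), p) A) * X ((0 : Fin 2), p + (k + 1))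
        ∈ below F (p + (k + 1) + 1) :=
      mul_mem (below_mono (by omega) (d_mem_below hdxyC hdxyX (pderiv_mem_below _ hA)))
        (X_mem_below fun _ => Nat.lt_succ_self _)
    rw [show p + (k + 1 + 1) = p + (k + 1) + 1 from rfl]
    convert add_mem h1 h2 using 1
    rw [map_sub, dxy.leibniz, hdxyX, Function.iterate_succ_apply' _ (k + 1)]
    simp only [smul_eq_mul]; ring_nf

/-- Ritt's division property of the general component: an element of `sat(A)` whose order in `x`
does not exceed that of `A` is a multiple of `A`. -/
lemma dvd_of_mem_satSet [CharZero F] (hdxyC : ∀ a : F, dxy (C a) = C (δF a))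
    (hdxyX : ∀ (i : Fin 2) (k : ℕ), dxy (X (i, k)) = X (i, k + 1))
    {A : MvPolynomial (Fin 2 × ℕ) F} (hA : Irreducible A) {p : ℕ}
    (hp : ordIdx 0 A = (p : WithBot ℕ)) (hpA : ((0 : Fin 2), p) ∈ A.vars)
    (hAp : A ∈ below F (p + 1)) {B : MvPolynomial (Fin 2 × ℕ) F} (hB : B ∈ satSet dxy A)
    (hBp : B ∈ below F (p + 1)) : A ∣ B := by
  classical
  have hprime : (Ideal.span {A}).IsPrime :=
    (Ideal.span_singleton_prime hA.ne_zero).2 hA.prime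
  let R := MvPolynomial (Fin 2 × ℕ) F ⧸ Ideal.span {A}
  let K := FractionRing R
  let π : MvPolynomial (Fin 2 × ℕ) F →ₐ[F] K :=
    (IsScalarTower.toAlgHom F R K).comp (Ideal.Quotient.mkₐ F (Ideal.span {A}))
  have hπ : ∀ f, π f = 0 ↔ A ∣ f := by
    intro f
    rw [← Ideal.mem_span_singleton, ← Ideal.Quotient.eq_zero_iff_mem]
    exact (injective_iff_map_eq_zero' (algebraMap R K)).1 (IsFractionRing.injective R K) _
  set S := pderiv ((0 : Fin 2), p) A with hS
  have hπS : π S ≠ 0 := fun h => not_dvd_pderiv hpA ((hπ _).1 h)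
  let T : ℕ → MvPolynomial (Fin 2 × ℕ) F := fun n => (⇑dxy)^[n - p] A - S * X ((0 : Fin 2), n)
  -- `a n` is the value of `x_n`: it is read off from `π` for `n ≤ p`, and for `n > p` it is
  -- solved from the equation `d^{n-p} A = 0`, which is linear in `x_n`.
  let step : (n : ℕ) → ((m : ℕ) → m < n → K) → K := fun n a =>
    if n ≤ p then π (X (0, n)) else
      - aeval (fun v : Fin 2 × ℕ => if v.1 = 0 then (if h : v.2 < n then a v.2 h else 0)
        else π (X v)) (T n) / π S
  let a : ℕ → K := fun n => Nat.strongRec (motive := fun _ => K) step n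
  have ha : ∀ n, a n = step n fun m _ => a m := fun n => by
    change Nat.strongRec (motive := fun _ => K) step n = _
    rw [Nat.strongRec_eq]
  let φ : MvPolynomial (Fin 2 × ℕ) F →ₐ[F] K :=
    aeval fun v => if v.1 = 0 then a v.2 else π (X v)
  have hφπ : ∀ f ∈ below F (p + 1), φ f = π f := by
    intro f hf
    refine hom_congr_vars (f₁ := φ.toRingHom) (f₂ := π.toRingHom) ?_ ?_ rfl
    · ext x; simp
    · intro v hv _
      have h1 := mem_below.1 hf v hv
      obtain ⟨i, k⟩ := v
      by_cases hi : i = 0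
      · subst hi
        have h2 : k ≤ p := Nat.lt_succ_iff.1 (h1 rfl)
        simp [φ, ha k, step, h2]
      · simp [φ, hi]
  have hφd : ∀ k, φ ((⇑dxy)^[k] A) = 0 := by
    intro k
    rcases k with _ | k
    · rw [Function.iterate_zero_apply, hφπ A hAp]
      exact (hπ A).2 dvd_rfl
    · have hT : T (p + (k + 1)) ∈ below F (p + (k + 1)) := by
        have := iterate_d_sub_mem_below hdxyC hdxyX hAp k
        simpa only [T, Nat.add_sub_cancel_left] using this
      have h1 : φ (T (p + (k + 1))) = aeval (fun v : Fin 2 × ℕ => if v.1 = 0 then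
          (if h : v.2 < p + (k + 1) then a v.2 else 0) else π (X v)) (T (p + (k + 1))) := by
        refine eval₂Hom_congr' rfl (fun v hv _ => ?_) rfl
        by_cases hv0 : v.1 = 0
        · simp [hv0, mem_below.1 hT v hv hv0]
        · simp [hv0]
      have h2 : a (p + (k + 1)) = - φ (T (p + (k + 1))) / π S := by
        rw [ha, h1]
        simp only [step]
        rw [if_neg (by omega)]
      have h3 : (⇑dxy)^[k + 1] A = T (p + (k + 1)) + S * X ((0 : Fin 2), p + (k + 1)) := by
        simp only [T, Nat.add_sub_cancel_left, sub_add_cancel]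
      have h4 : φ (X ((0 : Fin 2), p + (k + 1))) = a (p + (k + 1)) := by simp [φ]
      rw [h3, map_add, map_mul, h4, h2, hφπ S (pderiv_mem_below _ hAp)]
      rw [mul_div_cancel₀ _ hπS, add_neg_cancel]
  obtain ⟨m, hm⟩ := hB
  have hker : diffIdeal dxy A ≤ RingHom.ker φ := by
    refine Ideal.span_le.2 ?_
    rintro _ ⟨k, rfl⟩
    exact hφd k
  have h5 : φ (sepX A ^ m * B) = 0 := hker hm
  have h6 : sepX A = S := by rw [sepX, hp]; rfl
  rw [h6, map_mul, map_pow, hφπ S (pderiv_mem_below _ hAp), hφπ B hBp] at h5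
  exact (hπ B).1 ((mul_eq_zero.1 h5).resolve_left (pow_ne_zero _ hπS))

end Poly

/-! ### The order of an element in `u` -/

section Order

variable {F}

variable (F) in
/-- The field of elements of `E` algebraic over `F(u, Du, …, D^{n-1}u)`. Elements of order `n` in
`u` are those in `lowCl F D u (n + 1)` but not in `lowCl F D u n`. -/
def lowCl (D : Derivation ℤ E E) (u : E) (n : ℕ) : IntermediateField F E :=
  algCl F ((fun k => (⇑D)^[k] u) '' Set.Iio n)

variable {δF : Derivation ℤ F F} {D : Derivation ℤ E E} {u : E}

lemma iterate_mem_lowCl {k n : ℕ} (h : k < n) : (⇑D)^[k] u ∈ lowCl F D u n :=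
  subset_algCl _ ⟨k, h, rfl⟩

lemma lowCl_mono {m n : ℕ} (h : m ≤ n) : lowCl F D u m ≤ lowCl F D u n :=
  algCl_mono (Set.image_mono (Set.Iio_subset_Iio h))

lemma Iio_succ_insert (n : ℕ) : Set.Iio (n + 1) = insert n (Set.Iio n) := by
  ext k
  simp only [Set.mem_Iio, Set.mem_insert_iff]
  omega

lemma lowCl_succ (n : ℕ) : lowCl F D u (n + 1) =
    algCl F (insert ((⇑D)^[n] u) ((fun k => (⇑D)^[k] u) '' Set.Iio n)) := by
  rw [lowCl, ← Set.image_insert_eq (f := fun k => (⇑D)^[k] u), Iio_succ_insert]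

lemma iterate_notMem_lowCl (hu : DiffTrans F D u) (n : ℕ) : (⇑D)^[n] u ∉ lowCl F D u n := by
  have hind : (AlgebraicIndependent.matroid F E).Indep (Set.range fun k => (⇑D)^[k] u) :=
    AlgebraicIndependent.matroid_indep_iff.2 hu.to_subtype_range
  have h1 := hind.notMem_closure_sdiff_of_mem (e := (⇑D)^[n] u) ⟨n, rfl⟩
  rw [← mem_algCl_iff_closure] at h1
  refine fun h => h1 (algCl_mono ?_ h)
  rintro _ ⟨k, hk, rfl⟩
  refine ⟨⟨k, rfl⟩, fun h2 => ?_⟩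
  exact (ne_of_lt hk) (hu.injective h2)

/-- Differentiation raises the order by exactly one. If `D w` had order at most `n`, then `D` would
map `F(u, …, D^{n-1}u, w)`, hence also its algebraic closure, into `lowCl F D u (n + 1)`; by
exchange that closure contains `D^n u`, so `D^{n+1}u` would have order at most `n`. -/
lemma order_step [CharZero F] (hD : ∀ a : F, D (algebraMap F E a) = algebraMap F E (δF a))
    (hu : DiffTrans F D u) {w : E} {n : ℕ} (h1 : w ∈ lowCl F D u (n + 1))
    (h0 : w ∉ lowCl F D u n) :
    D w ∈ lowCl F D u (n + 1 + 1) ∧ D w ∉ lowCl F D u (n + 1) := by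
  constructor
  · refine map_algCl hD ?_ ?_ h1
    · rintro _ ⟨k, hk, rfl⟩
      have hk : k < n + 1 := hk
      exact iterate_mem_lowCl (by omega)
    · rintro _ ⟨k, hk, rfl⟩
      have hk : k < n + 1 := hk
      change D ((⇑D)^[k] u) ∈ _
      rw [← Function.iterate_succ_apply' (⇑D)]
      exact iterate_mem_lowCl (n := n + 1 + 1) (by omega)
  · intro hw
    rw [lowCl_succ] at h1
    have h2 := exchange h1 h0
    have h3 : D ((⇑D)^[n] u) ∈ lowCl F D u (n + 1) := by
      refine map_algCl hD ?_ ?_ h2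
      · rintro _ (rfl | ⟨k, hk, rfl⟩)
        · rwa [← lowCl_succ] at h1
        · have hk : k < n := hk
          exact iterate_mem_lowCl (n := n + 1) (by omega)
      · rintro _ (rfl | ⟨k, hk, rfl⟩)
        · exact hw
        · have hk : k < n := hk
          change D ((⇑D)^[k] u) ∈ _
          rw [← Function.iterate_succ_apply' (⇑D)]
          exact iterate_mem_lowCl (n := n + 1) (by omega)
    rw [← Function.iterate_succ_apply' (⇑D)] at h3
    exact iterate_notMem_lowCl hu _ h3

lemma order_iterate [CharZero F] (hD : ∀ a : F, D (algebraMap F E a) = algebraMap F E (δF a))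
    (hu : DiffTrans F D u) {w : E} {m : ℕ} (h1 : w ∈ lowCl F D u (m + 1))
    (h0 : w ∉ lowCl F D u m) (k : ℕ) :
    (⇑D)^[k] w ∈ lowCl F D u (m + k + 1) ∧ (⇑D)^[k] w ∉ lowCl F D u (m + k) := by
  induction k with
  | zero => exact ⟨h1, h0⟩
  | succ k ih =>
    rw [Function.iterate_succ_apply']
    exact order_step hD hu ih.1 ih.2

lemma evalD_ne_zero (hu : DiffTrans F D u) {P : MvPolynomial ℕ F} (hP : P ≠ 0) :
    evalD F D u P ≠ 0 := fun h => hP (hu.eq_zero_of_aeval_eq_zero P h)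

lemma evalD_mem_lowCl {P : MvPolynomial ℕ F} {n : ℕ} (hP : ∀ k ∈ P.vars, k < n) :
    evalD F D u P ∈ lowCl F D u n := by
  have h1 : P ∈ supported F (Set.Iio n) := mem_supported.2 hP
  rw [supported_eq_adjoin_X] at h1
  have h2 : Algebra.adjoin F (X '' Set.Iio n) ≤
      (lowCl F D u n).toSubalgebra.comap (evalD F D u) := by
    refine Algebra.adjoin_le ?_
    rintro _ ⟨k, hk, rfl⟩
    change evalD F D u (X k) ∈ lowCl F D u n
    rw [evalD, aeval_X]
    exact iterate_mem_lowCl hk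
  exact h2 h1

/-- If the reduced fraction `P(u)/Q(u)` is algebraic over `F(u, …, D^{m-1}u)`, then, as in the
rational root theorem, `Q` divides the leading coefficient of an equation for it over
`F[u_0, …, u_{m-1}]`, so only these variables occur in `Q`. -/
lemma vars_den_lt (hu : DiffTrans F D u) {P Q : MvPolynomial ℕ F} (hQ : Q ≠ 0)
    (hPQ : IsRelPrime P Q) {m : ℕ} (h : evalD F D u P / evalD F D u Q ∈ lowCl F D u m) :
    ∀ k ∈ Q.vars, k < m := by
  obtain ⟨f, hf0, hf⟩ := mem_algCl'.1 h
  have hlift : ∀ a : Algebra.adjoin F ((fun k => (⇑D)^[k] u) '' Set.Iio m),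
      ∃ c : MvPolynomial ℕ F, c ∈ supported F (Set.Iio m) ∧ evalD F D u c = a := by
    have : Algebra.adjoin F ((fun k => (⇑D)^[k] u) '' Set.Iio m) ≤
        (supported F (Set.Iio m)).map (evalD F D u) := by
      refine Algebra.adjoin_le ?_
      rintro _ ⟨k, hk, rfl⟩
      exact ⟨X k, X_mem_supported.2 hk, by simp [evalD]⟩
    intro a
    obtain ⟨c, hc, hca⟩ := this a.2
    exact ⟨c, hc, hca⟩
  choose c hcs hc using hlift
  set n := f.natDegree with hn
  have hQ' := evalD_ne_zero hu hQ
  have hrel : ∑ i ∈ Finset.range (n + 1), c (f.coeff i) * P ^ i * Q ^ (n - i) = 0 := by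
    apply hu.eq_zero_of_aeval_eq_zero
    change evalD F D u _ = 0
    rw [Polynomial.aeval_eq_sum_range] at hf
    have h2 : (∑ i ∈ Finset.range (n + 1),
        f.coeff i • (evalD F D u P / evalD F D u Q) ^ i) * evalD F D u Q ^ n = 0 := by
      rw [hf, zero_mul]
    rw [← h2, map_sum, Finset.sum_mul]
    refine Finset.sum_congr rfl fun i hi => ?_
    have hi : i ≤ n := Nat.lt_succ_iff.1 (Finset.mem_range.1 hi)
    rw [map_mul, map_mul, map_pow, map_pow, hc, Subalgebra.smul_def, smul_eq_mul, div_pow,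
      ← Nat.sub_add_cancel hi, pow_add, Nat.sub_add_cancel hi]
    field_simp
  have hdvd : Q ∣ c (f.coeff n) * P ^ n := by
    rw [Finset.sum_range_succ, Nat.sub_self, pow_zero, mul_one] at hrel
    rw [← dvd_neg, ← eq_neg_of_add_eq_zero_left hrel]
    refine Finset.dvd_sum fun i hi => Dvd.dvd.mul_left (dvd_pow_self Q ?_) _
    have := Finset.mem_range.1 hi
    omega
  have hdvd' : Q ∣ c (f.coeff n) :=
    (IsRelPrime.pow_left hPQ).symm.dvd_of_dvd_mul_right hdvd
  have hne : c (f.coeff n) ≠ 0 := by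
    intro h0
    have h3 := hc (f.coeff n)
    rw [h0, map_zero] at h3
    exact hf0 (Polynomial.leadingCoeff_eq_zero.1 (Subtype.ext h3.symm))
  intro k hk
  exact mem_supported.1 (hcs (f.coeff n)) (vars_subset_of_dvd hdvd' hne hk)

/-- A reduced fraction `P(u)/Q(u)` has order `max (ord P) (ord Q)` in `u`. -/
lemma order_fraction (hu : DiffTrans F D u) {P Q : MvPolynomial ℕ F} (hP : P ≠ 0) (hQ : Q ≠ 0)
    (hPQ : IsRelPrime P Q) {m : ℕ} (hm : max (ordU P) (ordU Q) = (m : WithBot ℕ)) :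
    evalD F D u P / evalD F D u Q ∈ lowCl F D u (m + 1) ∧
      evalD F D u P / evalD F D u Q ∉ lowCl F D u m := by
  constructor
  · have hle : ∀ R : MvPolynomial ℕ F, ordU R ≤ m → ∀ k ∈ R.vars, k < m + 1 := by
      intro R hR k hk
      have := (Finset.le_max hk).trans hR
      exact Nat.lt_succ_iff.2 (WithBot.coe_le_coe.1 this)
    exact div_mem (evalD_mem_lowCl (hle P (hm ▸ le_max_left _ _)))
      (evalD_mem_lowCl (hle Q (hm ▸ le_max_right _ _)))
  · intro h
    have h1 := vars_den_lt hu hQ hPQ h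
    have h2 : ∀ k ∈ P.vars, k < m := by
      refine vars_den_lt hu hP hPQ.symm ?_
      rw [← inv_div]
      exact inv_mem h
    rcases max_choice (ordU P) (ordU Q) with h3 | h3
    · exact lt_irrefl _ (h2 m (Finset.mem_of_max (h3.symm.trans hm)))
    · exact lt_irrefl _ (h1 m (Finset.mem_of_max (h3.symm.trans hm)))

/-- If `w` has order `m` in `u`, then `u, …, D^{m-1}u` together with all derivatives of `w` are
algebraically independent: each new derivative of `w` has higher order than everything before. -/
lemma indep_union [CharZero F] (hD : ∀ a : F, D (algebraMap F E a) = algebraMap F E (δF a))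
    (hu : DiffTrans F D u) {w : E} {m : ℕ} (h1 : w ∈ lowCl F D u (m + 1))
    (h0 : w ∉ lowCl F D u m) :
    (AlgebraicIndependent.matroid F E).Indep
      ((fun k => (⇑D)^[k] u) '' Set.Iio m ∪ Set.range fun k => (⇑D)^[k] w) := by
  have hord := order_iterate hD hu h1 h0
  have hfin : ∀ n, (AlgebraicIndependent.matroid F E).Indep
      ((fun k => (⇑D)^[k] u) '' Set.Iio m ∪ (fun k => (⇑D)^[k] w) '' Set.Iio n) := by
    intro n
    induction n with
    | zero =>
      have hind : (AlgebraicIndependent.matroid F E).Indep (Set.range fun k => (⇑D)^[k] u) :=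
        AlgebraicIndependent.matroid_indep_iff.2 hu.to_subtype_range
      refine hind.subset ?_
      rintro _ (⟨k, _, rfl⟩ | ⟨k, hk, rfl⟩)
      · exact ⟨k, rfl⟩
      · exact absurd hk (Nat.not_lt_zero k)
    | succ n ih =>
      have hnot : (⇑D)^[n] w ∉ (AlgebraicIndependent.matroid F E).closure
          ((fun k => (⇑D)^[k] u) '' Set.Iio m ∪ (fun k => (⇑D)^[k] w) '' Set.Iio n) := by
        rw [← mem_algCl_iff_closure]
        refine fun h => (hord n).2 (algCl_le ?_ h)
        rintro _ (⟨k, hk, rfl⟩ | ⟨k, hk, rfl⟩)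
        · have hk : k < m := hk
          exact iterate_mem_lowCl (n := m + n) (by omega)
        · have hk : k < n := hk
          exact lowCl_mono (by omega) (hord k).1
      rw [Iio_succ_insert, Set.image_insert_eq, Set.union_insert]
      exact (ih.notMem_closure_iff (Set.mem_univ _)).1 hnot |>.1
  have hU : ((fun k => (⇑D)^[k] u) '' Set.Iio m ∪ Set.range fun k => (⇑D)^[k] w) =
      ⋃ n : ℕ, ((fun k => (⇑D)^[k] u) '' Set.Iio m ∪ (fun k => (⇑D)^[k] w) '' Set.Iio n) := by
    rw [← Set.union_iUnion, ← Set.image_iUnion, Set.iUnion_Iio, Set.image_univ]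
  rw [hU]
  refine AlgebraicIndependent.matroid_indep_iff.2
    (algebraicIndependent_iUnion_of_directed (Monotone.directed_le fun a b hab => ?_) hfin)
  exact Set.union_subset_union_right _ (Set.image_mono (Set.Iio_subset_Iio hab))

lemma iterate_injective [CharZero F]
    (hD : ∀ a : F, D (algebraMap F E a) = algebraMap F E (δF a))
    (hu : DiffTrans F D u) {w : E} {m : ℕ} (h1 : w ∈ lowCl F D u (m + 1))
    (h0 : w ∉ lowCl F D u m) : Function.Injective fun k => (⇑D)^[k] w := by
  have hord := order_iterate hD hu h1 h0
  have : ∀ i j, i < j → (⇑D)^[i] w ≠ (⇑D)^[j] w := fun i j hij he =>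
    (hord j).2 (he ▸ lowCl_mono (by omega) (hord i).1)
  intro i j hij
  by_contra hne
  rcases lt_or_gt_of_ne hne with h | h
  · exact this i j h hij
  · exact this j i h hij.symm

/-- An element having an order in `u` is differentially transcendental. -/
lemma diffTrans_of_order [CharZero F]
    (hD : ∀ a : F, D (algebraMap F E a) = algebraMap F E (δF a))
    (hu : DiffTrans F D u) {w : E} {m : ℕ} (h1 : w ∈ lowCl F D u (m + 1))
    (h0 : w ∉ lowCl F D u m) : DiffTrans F D w := by
  rw [DiffTrans, ← algebraicIndependent_subtype_range (iterate_injective hD hu h1 h0)]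
  exact AlgebraicIndependent.matroid_indep_iff.1
    ((indep_union hD hu h1 h0).subset Set.subset_union_right)

/-- If `w` has order `m` in `u`, then every `D^k u` is algebraic over
`F⟨w⟩(u, …, D^{m-1}u)`. -/
lemma iterate_mem_union [CharZero F]
    (hD : ∀ a : F, D (algebraMap F E a) = algebraMap F E (δF a))
    {w : E} {m : ℕ} (h1 : w ∈ lowCl F D u (m + 1)) (h0 : w ∉ lowCl F D u m) (k : ℕ) :
    (⇑D)^[k] u ∈
      algCl F ((fun k => (⇑D)^[k] u) '' Set.Iio m ∪ Set.range fun k => (⇑D)^[k] w) := by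
  set S := (fun k => (⇑D)^[k] u) '' Set.Iio m ∪ Set.range fun k => (⇑D)^[k] w with hS
  have hm : (⇑D)^[m] u ∈ algCl F S := by
    rw [lowCl_succ] at h1
    refine algCl_mono ?_ (exchange h1 h0)
    rintro _ (rfl | h)
    · exact Or.inr ⟨0, rfl⟩
    · exact Or.inl h
  refine iterate_mem_algCl hD (S := S) ?_ ?_ k
  · rintro _ (⟨j, hj, rfl⟩ | ⟨j, rfl⟩)
    · have hj : j < m := hj
      change D ((⇑D)^[j] u) ∈ _
      rw [← Function.iterate_succ_apply' (⇑D)]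
      rcases Nat.lt_or_ge (j + 1) m with h | h
      · exact subset_algCl S (Or.inl ⟨j + 1, h, rfl⟩)
      · rw [show j.succ = m by omega]; exact hm
    · refine subset_algCl S (Or.inr ⟨j + 1, ?_⟩)
      exact Function.iterate_succ_apply' _ _ _
  · rcases Nat.eq_zero_or_pos m with h | h
    · subst h; exact hm
    · exact subset_algCl S (Or.inl ⟨0, h, rfl⟩)

/-- Two independent sets with the same closure, both containing `T`, have equally many elements
outside `T`. -/
lemma encard_eq_of_closure_eq {α : Type*} {M : Matroid α} {X₁ X₂ T : Set α}
    (h₁ : M.Indep (X₁ ∪ T)) (h₂ : M.Indep (X₂ ∪ T)) (d₁ : Disjoint X₁ T) (d₂ : Disjoint X₂ T)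
    (hcl : M.closure (X₁ ∪ T) = M.closure (X₂ ∪ T)) : X₁.encard = X₂.encard := by
  have b₁ : (M.restrict (M.closure (X₁ ∪ T))).IsBase (X₁ ∪ T) :=
    (Matroid.isBase_restrict_iff (M.closure_subset_ground _)).2 h₁.isBasis_closure
  have b₂ : (M.restrict (M.closure (X₁ ∪ T))).IsBase (X₂ ∪ T) :=
    (Matroid.isBase_restrict_iff (M.closure_subset_ground _)).2 (hcl ▸ h₂.isBasis_closure)
  have h := b₁.encard_sdiff_comm b₂
  have e : ∀ {A B : Set α}, Disjoint A T → (A ∪ T) \ (B ∪ T) = A \ B := by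
    intro A B hA
    ext x
    have := fun hx : x ∈ A => Set.disjoint_left.1 hA hx
    simp only [Set.mem_sdiff, Set.mem_union]
    tauto
  rw [e d₁, e d₂] at h
  rw [← Set.encard_sdiff_add_encard_inter X₁ X₂, ← Set.encard_sdiff_add_encard_inter X₂ X₁, h,
    Set.inter_comm]

end Order

/-! ### Zeros of `A` and the two counts -/

section Curve

variable {F}

lemma forall_ne_of_ordIdx_eq_bot {i : Fin 2} {A : MvPolynomial (Fin 2 × ℕ) F}
    (h : ordIdx i A = ⊥) : ∀ v ∈ A.vars, v.1 ≠ i := by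
  classical
  intro v hv hvi
  have h1 := Finset.max_eq_bot.1 h
  have h2 : v.2 ∈ (A.vars.filter fun v => v.1 = i).image Prod.snd :=
    Finset.mem_image_of_mem _ (Finset.mem_filter.2 ⟨hv, hvi⟩)
  rw [h1] at h2
  exact Finset.notMem_empty _ h2

lemma mem_vars_of_ordIdx_eq {i : Fin 2} {A : MvPolynomial (Fin 2 × ℕ) F} {n : ℕ}
    (h : ordIdx i A = (n : WithBot ℕ)) : (i, n) ∈ A.vars := by
  obtain ⟨v, hv, hn⟩ := Finset.mem_image.1 (Finset.mem_of_max h)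
  obtain ⟨hv, hi⟩ := Finset.mem_filter.1 hv
  have : v = (i, n) := Prod.ext hi hn
  exact this ▸ hv

lemma le_of_ordIdx_eq {i : Fin 2} {A : MvPolynomial (Fin 2 × ℕ) F} {n : ℕ}
    (h : ordIdx i A = (n : WithBot ℕ)) {v : Fin 2 × ℕ} (hv : v ∈ A.vars) (hi : v.1 = i) :
    v.2 ≤ n :=
  Finset.le_max_of_eq (Finset.mem_image_of_mem _ (Finset.mem_filter.2 ⟨hv, hi⟩)) h

lemma ordIdx_cases (i : Fin 2) (A : MvPolynomial (Fin 2 × ℕ) F) :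
    ordIdx i A = ⊥ ∨ ∃ n : ℕ, ordIdx i A = (n : WithBot ℕ) := by
  rcases h : ordIdx i A with _ | n
  · exact Or.inl rfl
  · exact Or.inr ⟨n, rfl⟩

variable {δF : Derivation ℤ F F} {D : Derivation ℤ E E}
  {dxy : Derivation ℤ (MvPolynomial (Fin 2 × ℕ) F) (MvPolynomial (Fin 2 × ℕ) F)}
  {A : MvPolynomial (Fin 2 × ℕ) F} {u η₁ η₂ : E}

/-- The point `(η₁, Dη₁, …; η₂, Dη₂, …)` at which `evalD2` evaluates polynomials. -/
def jet (D : Derivation ℤ E E) (η₁ η₂ : E) (v : Fin 2 × ℕ) : E :=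
  (⇑D)^[v.2] (if v.1 = 0 then η₁ else η₂)

lemma evalD2_eq (B : MvPolynomial (Fin 2 × ℕ) F) :
    evalD2 F D η₁ η₂ B = aeval (jet D η₁ η₂) B := rfl

lemma jet_zero (k : ℕ) : jet D η₁ η₂ (0, k) = (⇑D)^[k] η₁ := by simp [jet]

lemma jet_one (k : ℕ) : jet D η₁ η₂ (1, k) = (⇑D)^[k] η₂ := by simp [jet]

lemma evalD2_self (hI : {B | evalD2 F D η₁ η₂ B = 0} = satSet dxy A) :
    aeval (jet D η₁ η₂) A = 0 := by
  have : A ∈ satSet dxy A := ⟨0, by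
    rw [pow_zero, one_mul]; exact Ideal.subset_span ⟨0, rfl⟩⟩
  rw [← hI] at this
  exact this

/-- If `η₂` is differentially transcendental, then `x` occurs in `A`. -/
lemma ordIdx_zero_ne_bot (hA : Irreducible A)
    (hI : {B | evalD2 F D η₁ η₂ B = 0} = satSet dxy A) (hη : DiffTrans F D η₂) :
    ordIdx 0 A ≠ ⊥ := by
  intro h
  have hv := forall_ne_of_ordIdx_eq_bot h
  have h1 : A ∈ supported F (Set.range fun k : ℕ => ((1 : Fin 2), k)) := by
    refine mem_supported.2 fun v hvA => ⟨v.2, Prod.ext ?_ rfl⟩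
    have := hv v hvA
    change 1 = v.1
    omega
  have h2 : AlgebraicIndependent F
      (jet D η₁ η₂ ∘ ((↑) : (Set.range fun k : ℕ => ((1 : Fin 2), k)) → Fin 2 × ℕ)) := by
    refine (algebraicIndependent_equiv' (Equiv.ofInjective (fun k : ℕ => ((1 : Fin 2), k))
      fun a b hab => (Prod.mk.inj hab).2) ?_).1 hη
    ext k
    exact jet_one k
  exact hA.ne_zero (algebraicIndependent_comp_subtype.1 h2 A h1 (evalD2_self hI))

lemma mem_below_of_ordIdx {p : ℕ} (hp : ordIdx 0 A = (p : WithBot ℕ)) : A ∈ below F (p + 1) :=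
  mem_below.2 fun _ hv h0 => Nat.lt_succ_iff.2 (le_of_ordIdx_eq hp hv h0)

variable [CharZero F]

lemma dvd_of_aeval_eq_zero (hdxyC : ∀ a : F, dxy (C a) = C (δF a))
    (hdxyX : ∀ (i : Fin 2) (k : ℕ), dxy (X (i, k)) = X (i, k + 1)) (hA : Irreducible A)
    (hI : {B | evalD2 F D η₁ η₂ B = 0} = satSet dxy A) {p : ℕ}
    (hp : ordIdx 0 A = (p : WithBot ℕ)) {B : MvPolynomial (Fin 2 × ℕ) F}
    (hB : aeval (jet D η₁ η₂) B = 0) (hBp : B ∈ below F (p + 1)) : A ∣ B := by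
  refine dvd_of_mem_satSet hdxyC hdxyX hA hp (mem_vars_of_ordIdx_eq hp) (mem_below_of_ordIdx hp)
    ?_ hBp
  rw [← hI]
  exact hB

lemma aeval_pderiv_ne_zero (hdxyC : ∀ a : F, dxy (C a) = C (δF a))
    (hdxyX : ∀ (i : Fin 2) (k : ℕ), dxy (X (i, k)) = X (i, k + 1)) (hA : Irreducible A)
    (hI : {B | evalD2 F D η₁ η₂ B = 0} = satSet dxy A) {p : ℕ}
    (hp : ordIdx 0 A = (p : WithBot ℕ)) {v : Fin 2 × ℕ} (hv : v ∈ A.vars) :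
    aeval (jet D η₁ η₂) (pderiv v A) ≠ 0 := fun h =>
  not_dvd_pderiv hv (dvd_of_aeval_eq_zero hdxyC hdxyX hA hI hp h
    (pderiv_mem_below v (mem_below_of_ordIdx hp)))

/-- Since `sat(A)` contains no nonzero polynomial of lower order in `x` than `A`, the elements
`η₁, …, D^{p-1}η₁` and all derivatives of `η₂`, where `p = ord_x A`, form an algebraically
independent family. -/
lemma algebraicIndependent_jet (hdxyC : ∀ a : F, dxy (C a) = C (δF a))
    (hdxyX : ∀ (i : Fin 2) (k : ℕ), dxy (X (i, k)) = X (i, k + 1)) (hA : Irreducible A)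
    (hI : {B | evalD2 F D η₁ η₂ B = 0} = satSet dxy A) {p : ℕ}
    (hp : ordIdx 0 A = (p : WithBot ℕ)) :
    AlgebraicIndependent F
      (jet D η₁ η₂ ∘ ((↑) : {v : Fin 2 × ℕ | v.1 = 0 → v.2 < p} → Fin 2 × ℕ)) := by
  refine algebraicIndependent_comp_subtype.2 fun B hB h0 => ?_
  replace hB : B ∈ below F p := hB
  by_contra hne
  have h1 := dvd_of_aeval_eq_zero hdxyC hdxyX hA hI hp h0 (below_mono p.le_succ hB)
  have h2 := vars_subset_of_dvd h1 hne (mem_vars_of_ordIdx_eq hp)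
  exact lt_irrefl p (mem_below.1 hB _ h2 rfl)

lemma image_jet (p : ℕ) : jet D η₁ η₂ '' {v : Fin 2 × ℕ | v.1 = 0 → v.2 < p} =
    (fun k => (⇑D)^[k] η₁) '' Set.Iio p ∪ Set.range fun k => (⇑D)^[k] η₂ := by
  ext x
  constructor
  · rintro ⟨⟨i, k⟩, hk, rfl⟩
    by_cases hi : i = 0
    · subst hi
      exact Or.inl ⟨k, hk rfl, (jet_zero k).symm⟩
    · obtain rfl : i = 1 := by omega
      exact Or.inr ⟨k, (jet_one k).symm⟩
  · rintro (⟨k, hk, rfl⟩ | ⟨k, rfl⟩)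
    · exact ⟨(0, k), fun _ => hk, jet_zero k⟩
    · exact ⟨(1, k), fun h => absurd h one_ne_zero, jet_one k⟩

/-- `ord_x A` is the number of elements that a transcendence basis of `F⟨η₁, η₂⟩ = F⟨u⟩` has
besides the derivatives of `η₂`; counted with the basis `u, …, D^{m₂-1}u, η₂, Dη₂, …`, it
is `m₂`. -/
lemma ordIdx_zero_eq (hD : ∀ a : F, D (algebraMap F E a) = algebraMap F E (δF a))
    (hdxyC : ∀ a : F, dxy (C a) = C (δF a))
    (hdxyX : ∀ (i : Fin 2) (k : ℕ), dxy (X (i, k)) = X (i, k + 1)) (hA : Irreducible A)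
    (hu : DiffTrans F D u) (hI : {B | evalD2 F D η₁ η₂ B = 0} = satSet dxy A)
    (hgen : genDF F D {η₁, η₂} = genDF F D {u}) {m₁ m₂ : ℕ}
    (hη₁ : η₁ ∈ lowCl F D u (m₁ + 1)) (hη₁' : η₁ ∉ lowCl F D u m₁)
    (hη₂ : η₂ ∈ lowCl F D u (m₂ + 1)) (hη₂' : η₂ ∉ lowCl F D u m₂) {p : ℕ}
    (hp : ordIdx 0 A = (p : WithBot ℕ)) : p = m₂ := by
  set T : Set E := Set.range fun k => (⇑D)^[k] η₂ with hT
  set X₁ : Set E := (fun k => (⇑D)^[k] η₁) '' Set.Iio p with hX₁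
  set X₂ : Set E := (fun k => (⇑D)^[k] u) '' Set.Iio m₂ with hX₂
  have hjet := algebraicIndependent_jet hdxyC hdxyX hA hI hp
  have i₁ : (AlgebraicIndependent.matroid F E).Indep (X₁ ∪ T) := by
    rw [hX₁, hT, ← image_jet]
    exact AlgebraicIndependent.matroid_indep_iff.2 hjet.image
  have i₂ : (AlgebraicIndependent.matroid F E).Indep (X₂ ∪ T) := indep_union hD hu hη₂ hη₂'
  have d₁ : Disjoint X₁ T := by
    rw [Set.disjoint_left]
    rintro _ ⟨k, hk, rfl⟩ ⟨j, hj⟩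
    have h1 := hjet.injective
      (a₁ := (⟨(1, j), fun h => absurd h one_ne_zero⟩ : {v : Fin 2 × ℕ | v.1 = 0 → v.2 < p}))
      (a₂ := (⟨(0, k), fun _ => hk⟩ : {v : Fin 2 × ℕ | v.1 = 0 → v.2 < p}))
      ((jet_one j).trans (hj.trans (jet_zero k).symm))
    have h2 := congrArg (fun v => v.1.1) h1
    exact one_ne_zero h2
  have d₂ : Disjoint X₂ T := by
    rw [Set.disjoint_left]
    rintro _ ⟨k, hk, rfl⟩ ⟨j, hj⟩
    refine (order_iterate hD hu hη₂ hη₂' j).2 ?_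
    replace hj : (⇑D)^[j] η₂ = (⇑D)^[k] u := hj
    have hk : k < m₂ := hk
    rw [hj]
    exact iterate_mem_lowCl (by omega)
  -- `η₁` and `η₂` generate `F⟨u⟩`, and `D^p η₁` is algebraic over `X₁ ∪ T` by `A(η) = 0`.
  have hle₁ : algCl F (X₂ ∪ T) ≤ algCl F (X₁ ∪ T) := by
    have hstep : (⇑D)^[p] η₁ ∈ algCl F (X₁ ∪ T) := by
      rw [← jet_zero (η₂ := η₂)]
      refine mem_algCl_of_pderiv (evalD2_self hI)
        (aeval_pderiv_ne_zero hdxyC hdxyX hA hI hp (mem_vars_of_ordIdx_eq hp)) ?_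
      intro w hw hne
      refine subset_algCl _ ?_
      rw [hX₁, hT, ← image_jet]
      refine ⟨w, fun h0 => lt_of_le_of_ne (le_of_ordIdx_eq hp hw h0) fun h2 => ?_, rfl⟩
      exact hne (Prod.ext h0 h2)
    have hDS : ∀ s ∈ X₁ ∪ T, D s ∈ algCl F (X₁ ∪ T) := by
      rintro _ (⟨j, hj, rfl⟩ | ⟨j, rfl⟩)
      · have hj : j < p := hj
        change D ((⇑D)^[j] η₁) ∈ _
        rw [← Function.iterate_succ_apply' (⇑D)]
        rcases Nat.lt_or_ge (j + 1) p with h | h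
        · exact subset_algCl _ (Or.inl ⟨j + 1, h, rfl⟩)
        · rw [show j.succ = p by omega]; exact hstep
      · exact subset_algCl _ (Or.inr ⟨j + 1, Function.iterate_succ_apply' _ _ _⟩)
    have h1 : η₁ ∈ algCl F (X₁ ∪ T) := by
      rcases Nat.eq_zero_or_pos p with h | h
      · rw [h] at hstep; exact hstep
      · exact subset_algCl _ (Or.inl ⟨0, h, rfl⟩)
    have h2 : η₂ ∈ algCl F (X₁ ∪ T) := subset_algCl _ (Or.inr ⟨0, rfl⟩)
    have h3 : genDF F D {η₁, η₂} ≤ algCl F (X₁ ∪ T) := by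
      refine IntermediateField.adjoin_le_iff.2 ?_
      rintro _ ⟨s, rfl | rfl, k, rfl⟩
      · exact iterate_mem_algCl hD hDS h1 k
      · exact iterate_mem_algCl hD hDS h2 k
    refine algCl_le ?_
    rintro _ (⟨k, hk, rfl⟩ | ht)
    · refine h3 (hgen ▸ ?_)
      exact IntermediateField.subset_adjoin _ _ ⟨u, rfl, k, rfl⟩
    · exact subset_algCl _ (Or.inr ht)
  have hle₂ : algCl F (X₁ ∪ T) ≤ algCl F (X₂ ∪ T) := by
    have hu' := fun k => iterate_mem_union (u := u) hD hη₂ hη₂' k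
    have hlow : ∀ n, lowCl F D u n ≤ algCl F (X₂ ∪ T) := by
      refine fun n => algCl_le ?_
      rintro _ ⟨k, _, rfl⟩
      exact hu' k
    refine algCl_le ?_
    rintro _ (⟨k, hk, rfl⟩ | ht)
    · exact hlow _ (order_iterate hD hu hη₁ hη₁' k).1
    · exact subset_algCl _ (Or.inr ht)
  have hcard := encard_eq_of_closure_eq i₁ i₂ d₁ d₂ (by
    rw [← coe_algCl, ← coe_algCl, le_antisymm hle₁ hle₂])
  rw [hX₁, hX₂, (iterate_injective hD hu hη₁ hη₁').encard_image, hu.injective.encard_image] at hcard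
  have hI' : ∀ n : ℕ, (Set.Iio n).encard = n := fun n => by
    rw [← Finset.coe_Iio, Set.encard_coe_eq_coe_finsetCard, Nat.card_Iio]
  rw [hI', hI'] at hcard
  exact_mod_cast hcard

/-- The highest order in `u` among the `v(η)` with `v` a variable of `A` cannot be attained only
once: solving `A(η) = 0` for a unique term of highest order would bound its order. -/
lemma exists_order_le (hD : ∀ a : F, D (algebraMap F E a) = algebraMap F E (δF a))
    (hu : DiffTrans F D u) (h0 : aeval (jet D η₁ η₂) A = 0) {m : Fin 2 → ℕ}
    (hη : ∀ i, jet D η₁ η₂ (i, 0) ∈ lowCl F D u (m i + 1) ∧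
      jet D η₁ η₂ (i, 0) ∉ lowCl F D u (m i)) {v : Fin 2 × ℕ}
    (h1 : aeval (jet D η₁ η₂) (pderiv v A) ≠ 0) :
    ∃ w ∈ A.vars, w ≠ v ∧ m v.1 + v.2 ≤ m w.1 + w.2 := by
  by_contra! hlt
  have hord : ∀ w : Fin 2 × ℕ, jet D η₁ η₂ w ∈ lowCl F D u (m w.1 + w.2 + 1) ∧
      jet D η₁ η₂ w ∉ lowCl F D u (m w.1 + w.2) := fun w =>
    order_iterate hD hu (hη w.1).1 (hη w.1).2 w.2
  refine (hord v).2 (mem_algCl_of_pderiv h0 h1 fun w hw hne => ?_)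
  exact lowCl_mono (hlt w hw hne) (hord w).1

end Curve

/-- for a proper differential rational parametrization of `(C, A)`,
`m₁ = ord_y A` and `m₂ = ord_x A`. -/
theorem order_of_proper_param [CharZero F]
    (δF : Derivation ℤ F F) (D : Derivation ℤ E E)
    (hD : ∀ a : F, D (algebraMap F E a) = algebraMap F E (δF a))
    (dxy : Derivation ℤ (MvPolynomial (Fin 2 × ℕ) F) (MvPolynomial (Fin 2 × ℕ) F))
    (hdxyC : ∀ a : F, dxy (C a) = C (δF a))
    (hdxyX : ∀ (i : Fin 2) (k : ℕ), dxy (X (i, k)) = X (i, k + 1))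
    (A : MvPolynomial (Fin 2 × ℕ) F) (hA : Irreducible A)
    (u : E) (P₁ Q₁ P₂ Q₂ : MvPolynomial ℕ F)
    (hpar : IsProperParam F D dxy A u P₁ Q₁ P₂ Q₂)
    (m₁ m₂ : ℕ) (hm₁ : max (ordU P₁) (ordU Q₁) = (m₁ : WithBot ℕ))
    (hm₂ : max (ordU P₂) (ordU Q₂) = (m₂ : WithBot ℕ)) :
    ordIdx 1 A = (m₁ : WithBot ℕ) ∧ ordIdx 0 A = (m₂ : WithBot ℕ) := by
  obtain ⟨⟨hu, hP₁, hQ₁, hPQ₁, hP₂, hQ₂, hPQ₂, -, hI⟩, hgen⟩ := hpar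
  obtain ⟨hη₁, hη₁'⟩ := order_fraction hu hP₁ hQ₁ hPQ₁ hm₁
  obtain ⟨hη₂, hη₂'⟩ := order_fraction hu hP₂ hQ₂ hPQ₂ hm₂
  generalize evalD F D u P₁ / evalD F D u Q₁ = η₁ at *
  generalize evalD F D u P₂ / evalD F D u Q₂ = η₂ at *
  obtain ⟨p, hp⟩ := (ordIdx_cases 0 A).resolve_left
    (ordIdx_zero_ne_bot hA hI (diffTrans_of_order hD hu hη₂ hη₂'))
  have hpm : p = m₂ := ordIdx_zero_eq hD hdxyC hdxyX hA hu hI hgen hη₁ hη₁' hη₂ hη₂' hp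
  have hη : ∀ i, jet D η₁ η₂ (i, 0) ∈ lowCl F D u (![m₁, m₂] i + 1) ∧
      jet D η₁ η₂ (i, 0) ∉ lowCl F D u (![m₁, m₂] i) := by
    intro i
    fin_cases i
    · exact ⟨hη₁, hη₁'⟩
    · exact ⟨hη₂, hη₂'⟩
  have hne := fun v (hv : v ∈ A.vars) => exists_order_le hD hu (evalD2_self hI) hη
    (aeval_pderiv_ne_zero hdxyC hdxyX hA hI hp hv)
  -- The highest derivatives `D^p η₁` and `D^q η₂` have orders `m₁ + p` and `m₂ + q` in `u`; as
  -- neither can be the only term of highest order, the two orders agree.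
  obtain ⟨⟨i, k⟩, hw, hwne, hle⟩ := hne (0, p) (mem_vars_of_ordIdx_eq hp)
  obtain rfl : i = 1 := by
    by_contra hi
    obtain rfl : i = 0 := by omega
    have h1 : k ≤ p := le_of_ordIdx_eq hp hw rfl
    have h2 : k ≠ p := fun h => hwne (by rw [h])
    have h3 : m₁ + p ≤ m₁ + k := hle
    omega
  replace hle : m₁ + p ≤ m₂ + k := hle
  obtain ⟨q, hq⟩ := (ordIdx_cases 1 A).resolve_left
    fun h => forall_ne_of_ordIdx_eq_bot h _ hw rfl
  have hkq : k ≤ q := le_of_ordIdx_eq hq hw rfl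
  obtain ⟨⟨j, l⟩, hw', hwne', hle'⟩ := hne (1, q) (mem_vars_of_ordIdx_eq hq)
  obtain rfl : j = 0 := by
    by_contra hj
    obtain rfl : j = 1 := by omega
    have h1 : l ≤ q := le_of_ordIdx_eq hq hw' rfl
    have h2 : l ≠ q := fun h => hwne' (by rw [h])
    have h3 : m₂ + q ≤ m₂ + l := hle'
    omega
  replace hle' : m₂ + q ≤ m₁ + l := hle'
  have hlp : l ≤ p := le_of_ordIdx_eq hp hw' rfl
  rw [hq, hp]
  exact ⟨congrArg _ (by omega), congrArg _ hpm⟩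

end DiffCurve
end
end

section
/- Let A ∈ F{x,y} be irreducible with ord_x(A) ≥ 0 defining the differential curve (C,A). (i) If (u, P₁, Q₁, P₂, Q₂) and (u, P₃, Q₃, P₄, Q₄) are two proper differential rational parametrizations of (C,A) (with the same differentially transcendental u), then there exist a, b, c, d ∈ F with a·d − b·c ≠ 0 such that, setting v := (a·u + b)/(c·u + d) ∈ E (note c·u + d ≠ 0), one has Q₁(v) ≠ 0, Q₂(v) ≠ 0, P₃(u)/Q₃(u) = P₁(v)/Q₁(v) and P₄(u)/Q₄(u) = P₂(v)/Q₂(v). (ii) Conversely, if (u, P₁, Q₁, P₂, Q₂) is a proper parametrization of (C,A) and a, b, c, d ∈ F satisfy a·d − b·c ≠ 0, then with v := (a·u + b)/(c·u + d) the pair (P₁(v)/Q₁(v), P₂(v)/Q₂(v)) is again a generic point of sat(A) whose differential subfield together with F is F⟨{u}⟩, i.e. it yields a proper parametrization of (C,A). -/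
/-!
The second half rests on the fact that a Möbius transform `v` of `u` is again differentially
transcendental with `F⟨v⟩ = F⟨u⟩` (`moebius_genDF`), so `u ↦ v` extends to a differential
`F`-homomorphism of `F⟨u⟩` (`exists_hom_of_diffTrans`). Such a homomorphism carries a generic point
to a generic point of the same ideal and generated fields to generated fields.

For the first half, two generic points `η`, `θ` of the same ideal are related by a differential
`F`-homomorphism `φ` with `φ η = θ`. Both parametrizations being proper, `φ` is an automorphism of
`F⟨u⟩`, and `v = φ u` satisfies `F⟨v⟩ = F⟨u⟩`. It remains to see that `v` is a Möbius transform of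
`u`, a differential Lüroth-type statement.

In characteristic `0` there are `F`-derivations `∂_k` of `E` dual to the algebraically independent
family `D^k u` (`exists_derivation`); on `F⟨u⟩` they satisfy `[∂_{k+1}, D] = ∂_k` and `[∂_0, D] = 0`
(`dual_deriv`). Hence if `m` is the largest index with `∂_m v ≠ 0`, then `∂_{m+k}` kills `D^l v` for
`l < k` and takes the nonzero value `∂_m v` on `D^k v`. If `m ≥ 1`, one can therefore correct `∂_0`
successively by multiples of `∂_m, ∂_{m+1}, …`, all of which kill `u`, to a derivation that kills
`v, …, D^N v` but takes the value `1` on `u`; this contradicts `u ∈ F(v, …, D^N v)` for large `N`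
(`dual_eq_zero`). So `∂_k v = 0` for all `k ≥ 1`, which forces `v ∈ F(u)`
(`mem_adjoin_zero_of_dual`). By symmetry `u ∈ F(v)`, and the degree formula
`[F(X) : F(f)] = max (deg num f) (deg denom f)` makes `v` a Möbius transform of `u`
(`exists_moebius`).
-/

open MvPolynomial

noncomputable section

namespace DiffCurve

variable (F : Type*) {E : Type*} [Field F] [Field E] [Algebra F E]

variable {F}

variable (F)

/-! ### Derivations with prescribed values on an algebraically independent family -/

/-- Infinitesimal lifting for a formally smooth algebra, phrased with ring homomorphisms so that no
algebra structure on `B` has to be fixed in advance. -/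
theorem exists_ringHom_section {R A B : Type*} [CommRing R] [CommRing A] [CommRing B] [Algebra R A]
    [Algebra.FormallySmooth R A] (f : R →+* B) (g : B →+* A) (hg : Function.Surjective g)
    (hker : IsNilpotent (RingHom.ker g)) (h : g.comp f = algebraMap R A) :
    ∃ l : A →+* B, (∀ a, g (l a) = a) ∧ ∀ r, l (algebraMap R A r) = f r := by
  let _ := f.toAlgebra
  let g' : B →ₐ[R] A := { g with commutes' := fun r => RingHom.congr_fun h r }
  refine ⟨(Algebra.FormallySmooth.liftOfSurjective (AlgHom.id R A) g' hg hker : A →ₐ[R] B), ?_, ?_⟩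
  · intro a
    exact Algebra.FormallySmooth.liftOfSurjective_apply (AlgHom.id R A) g' hg hker a
  · intro r
    exact AlgHom.commutes _ r

open scoped IntermediateField.algebraAdjoinAdjoin in
/-- An `F`-derivation of `E` can be prescribed freely on a transcendence basis: `E` is formally
smooth over `F[x]`, so the homomorphism `x i ↦ x i + ε c i` from `F[x]` to the dual numbers over `E`
extends to `E`, and the `ε`-part of the extension is the derivation. -/
theorem exists_derivation_of_basis {F E ι : Type*} [Field F] [Field E] [Algebra F E] [CharZero F]
    {x : ι → E} (hx : IsTranscendenceBasis F x) (c : ι → E) :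
    ∃ Δ : Derivation F E E, ∀ i, Δ (x i) = c i := by
  have hK : Algebra.FormallySmooth (Algebra.adjoin F (Set.range x))
      (IntermediateField.adjoin F (Set.range x)) :=
    .of_isLocalization (nonZeroDivisors _)
  have halg : Algebra.IsAlgebraic (IntermediateField.adjoin F (Set.range x)) E :=
    hx.isAlgebraic_field
  have hE : Algebra.FormallyEtale (IntermediateField.adjoin F (Set.range x)) E :=
    Algebra.FormallyEtale.of_isSeparable _ _
  have hsm : Algebra.FormallySmooth (Algebra.adjoin F (Set.range x)) E :=
    .comp _ (IntermediateField.adjoin F (Set.range x)) _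
  let φ : MvPolynomial ι F →ₐ[F] TrivSqZeroExt E E :=
    aeval fun i => TrivSqZeroExt.inl (x i) + TrivSqZeroExt.inr (c i)
  have hφ : (TrivSqZeroExt.fstHom F E E).comp φ = aeval x := by
    ext i; simp [φ]
  obtain ⟨l, hl1, hl2⟩ := exists_ringHom_section (A := E)
    (φ.comp hx.1.aevalEquiv.symm.toAlgHom).toRingHom
    (TrivSqZeroExt.fstHom F E E).toRingHom (fun a => ⟨TrivSqZeroExt.inl a, rfl⟩)
    ⟨2, by
      rw [pow_two, Ideal.zero_eq_bot, eq_bot_iff, Ideal.mul_le]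
      intro a ha b hb
      have ha' : a.fst = 0 := ha
      have hb' : b.fst = 0 := hb
      refine (Submodule.mem_bot _).2 (TrivSqZeroExt.ext ?_ ?_) <;> simp [ha', hb']⟩
    (by
      ext r
      obtain ⟨p, rfl⟩ := hx.1.aevalEquiv.surjective r
      have := AlgHom.congr_fun hφ p
      simpa using this)
  have hl1' : ∀ a, (l a).fst = a := hl1
  have hlp : ∀ p : MvPolynomial ι F, l (aeval x p) = φ p := by
    intro p
    have := hl2 (hx.1.aevalEquiv p)
    simpa using this
  have hlF : ∀ a : F, l (algebraMap F E a) = TrivSqZeroExt.inl (algebraMap F E a) := by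
    intro a
    have := hlp (C a)
    rw [algHom_C, algHom_C] at this
    rw [this]
    rfl
  let Δ₀ : E →ₗ[F] E :=
    { toFun := fun a => (l a).snd
      map_add' := by simp
      map_smul' := by
        intro r a
        rw [Algebra.smul_def, map_mul, hlF]
        simp [Algebra.smul_def] }
  refine ⟨Derivation.mk' Δ₀ ?_, ?_⟩
  · intro a b
    simp [Δ₀, hl1', mul_comm]
  · intro i
    have := hlp (X i)
    rw [aeval_X] at this
    change (l (x i)).snd = c i
    rw [this]
    simp [φ]

theorem exists_derivation {F E ι : Type*} [Field F] [Field E] [Algebra F E] [CharZero F]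
    {x : ι → E} (hx : AlgebraicIndependent F x) (c : ι → E) :
    ∃ Δ : Derivation F E E, ∀ i, Δ (x i) = c i := by
  obtain ⟨t, hst, ht⟩ := exists_isTranscendenceBasis_superset hx.to_subtype_range
  obtain ⟨Δ, h⟩ := exists_derivation_of_basis ht
    (fun b => Function.extend x c 0 b)
  refine ⟨Δ, fun i => ?_⟩
  have := h ⟨x i, hst ⟨i, rfl⟩⟩
  rw [hx.injective.extend_apply] at this
  exact this

/-! ### Constants of derivations -/

/-- The field of constants of an `F`-derivation of `E`. -/
def constF {F E : Type*} [Field F] [Field E] [Algebra F E] (Δ : Derivation F E E) :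
    IntermediateField F E where
  carrier := {x | Δ x = 0}
  mul_mem' := by
    intro a b ha hb
    simp only [Set.mem_ofPred_eq] at *
    simp [ha, hb]
  add_mem' := by
    intro a b ha hb
    simp only [Set.mem_ofPred_eq] at *
    simp [ha, hb]
  algebraMap_mem' := fun r => Δ.map_algebraMap r
  inv_mem' := by
    intro a ha
    simp only [Set.mem_ofPred_eq] at *
    simp [Derivation.leibniz_inv, ha]

theorem mem_constF {F E : Type*} [Field F] [Field E] [Algebra F E] {Δ : Derivation F E E} {x : E} :
    x ∈ constF Δ ↔ Δ x = 0 := Iff.rfl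

/-- A derivation that vanishes on an intermediate field `L` is `L`-linear. -/
def extendConst {F E : Type*} [Field F] [Field E] [Algebra F E] (Δ : Derivation F E E)
    (L : IntermediateField F E) (h : L ≤ constF Δ) : Derivation L E E :=
  Derivation.mk'
    { toFun := Δ
      map_add' := map_add Δ
      map_smul' := by
        intro r a
        have hr : Δ (r : E) = 0 := h r.2
        simp [Algebra.smul_def, hr] }
    (fun a b => by simp)

theorem extendConst_apply {F E : Type*} [Field F] [Field E] [Algebra F E] (Δ : Derivation F E E)
    (L : IntermediateField F E) (h : L ≤ constF Δ) (x : E) : extendConst Δ L h x = Δ x := rfl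

theorem derivation_eq_zero_of_isAlgebraic {K E : Type*} [Field K] [Field E] [Algebra K E]
    [CharZero K] (Δ : Derivation K E E) {t : E} (ht : IsAlgebraic K t) : Δ t = 0 := by
  have h1 : Polynomial.aeval t (Polynomial.derivative (minpoly K t)) ≠ 0 :=
    (minpoly.irreducible ht.isIntegral).separable.aeval_derivative_ne_zero (minpoly.aeval K t)
  have h2 := Δ.map_aeval (minpoly K t) t
  rw [minpoly.aeval, map_zero, smul_eq_mul] at h2
  exact (mul_eq_zero.1 h2.symm).resolve_left h1

theorem charZero_intermediateField {F E : Type*} [Field F] [Field E] [Algebra F E] [CharZero F]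
    (L : IntermediateField F E) : CharZero L :=
  charZero_of_injective_algebraMap (algebraMap F L).injective

/-- The field of constants is algebraically closed in `E`. -/
theorem isAlgebraic_constF {F E : Type*} [Field F] [Field E] [Algebra F E] [CharZero F]
    (Δ : Derivation F E E) {t : E} (ht : IsAlgebraic (constF Δ) t) : Δ t = 0 := by
  have := charZero_intermediateField (constF Δ)
  exact derivation_eq_zero_of_isAlgebraic (extendConst Δ (constF Δ) le_rfl) ht

/-- A constant of `K(t)` for a `K`-derivation not killing `t` is already in `K`. -/
theorem mem_range_of_derivation {K E : Type*} [Field K] [Field E] [Algebra K E]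
    [CharZero K] (Δ : Derivation K E E) {t v : E} (hv : v ∈ IntermediateField.adjoin K {t})
    (hΔv : Δ v = 0) (hΔt : Δ t ≠ 0) : v ∈ (algebraMap K E).range := by
  obtain ⟨p, q, hpq⟩ := (IntermediateField.mem_adjoin_simple_iff K v).1 hv
  -- If `q` vanishes at `t`, then `v` is the junk value `0` of the quotient.
  by_cases hq : Polynomial.aeval t q = 0
  · rw [hq, div_zero] at hpq
    exact ⟨0, by simp [hpq]⟩
  let w : constF Δ := ⟨v, hΔv⟩
  -- `t` is a root of `v q - p`, whose coefficients are constants, while `t` is transcendental over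
  -- the constants; so `v q = p` coefficientwise.
  let r : Polynomial (constF Δ) := Polynomial.C w * q.map (algebraMap K (constF Δ))
    - p.map (algebraMap K (constF Δ))
  have hr : Polynomial.aeval t r = 0 := by
    simp only [r, map_sub, map_mul, Polynomial.aeval_C, Polynomial.aeval_map_algebraMap]
    change v * _ - _ = 0
    rw [hpq, div_mul_cancel₀ _ hq, sub_self]
  have hr0 : r = 0 := by
    by_contra hne
    exact hΔt (isAlgebraic_constF Δ ⟨r, hne, hr⟩)
  have hq0 : q ≠ 0 := by
    rintro rfl
    simp at hq
  have hc := congrArg (fun f => (Polynomial.coeff f q.natDegree)) hr0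
  simp only [r, Polynomial.coeff_sub, Polynomial.coeff_C_mul, Polynomial.coeff_map,
    Polynomial.coeff_zero] at hc
  have hc' : v * algebraMap K E q.leadingCoeff - algebraMap K E (p.coeff q.natDegree) = 0 :=
    congrArg Subtype.val hc
  have hlc : algebraMap K E q.leadingCoeff ≠ 0 := by
    simpa using hq0
  refine ⟨p.coeff q.natDegree / q.leadingCoeff, ?_⟩
  rw [map_div₀, div_eq_iff hlc]
  linear_combination -hc'

/-- An element of `F(f 0, f 1, …)` involves only finitely many of the generators. -/
theorem mem_adjoin_image_Iio {F E : Type*} [Field F] [Field E] [Algebra F E] (f : ℕ → E) {x : E}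
    (hx : x ∈ IntermediateField.adjoin F (Set.range f)) :
    ∃ N, x ∈ IntermediateField.adjoin F (f '' Set.Iio N) := by
  have mono : ∀ {M N : ℕ} {y : E}, M ≤ N → y ∈ IntermediateField.adjoin F (f '' Set.Iio M) →
      y ∈ IntermediateField.adjoin F (f '' Set.Iio N) := by
    intro M N y h hy
    exact IntermediateField.adjoin.mono F _ _ (Set.image_mono (Set.Iio_subset_Iio h)) hy
  induction hx using IntermediateField.adjoin_induction with
  | mem x hx =>
    obtain ⟨k, rfl⟩ := hx
    exact ⟨k + 1, IntermediateField.subset_adjoin _ _ ⟨k, by simp, rfl⟩⟩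
  | algebraMap a => exact ⟨0, IntermediateField.algebraMap_mem _ a⟩
  | add x y _ _ hx hy =>
    obtain ⟨M, hM⟩ := hx
    obtain ⟨N, hN⟩ := hy
    exact ⟨max M N, add_mem (mono (le_max_left _ _) hM) (mono (le_max_right _ _) hN)⟩
  | inv x _ hx =>
    obtain ⟨M, hM⟩ := hx
    exact ⟨M, inv_mem hM⟩
  | mul x y _ _ hx hy =>
    obtain ⟨M, hM⟩ := hx
    obtain ⟨N, hN⟩ := hy
    exact ⟨max M N, mul_mem (mono (le_max_left _ _) hM) (mono (le_max_right _ _) hN)⟩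

/-- If `Δ k` is dual to a sequence `f` and `Δ k v = 0` for `k ≥ 1`, then `v ∈ F(f 0)`. -/
theorem mem_adjoin_zero_of_dual {F E : Type*} [Field F] [Field E] [Algebra F E] [CharZero F]
    (f : ℕ → E) (Δ : ℕ → Derivation F E E) (hΔ : ∀ k j, Δ k (f j) = if j = k then 1 else 0)
    {v : E} (hv : v ∈ IntermediateField.adjoin F (Set.range f)) (h0 : ∀ k, 1 ≤ k → Δ k v = 0) :
    v ∈ IntermediateField.adjoin F {f 0} := by
  obtain ⟨N, hN⟩ := mem_adjoin_image_Iio f hv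
  -- Each step removes the top generator `t = f (n + 1)`: `v` is a constant of `Δ (n + 1)` in
  -- `L(t)`, where `L = F(f 0, …, f n)`, and `Δ (n + 1) t = 1`.
  have key : ∀ n, v ∈ IntermediateField.adjoin F (f '' Set.Iio (n + 1)) →
      v ∈ IntermediateField.adjoin F {f 0} := by
    intro n
    induction n with
    | zero =>
      intro h
      simpa using h
    | succ n ih =>
      intro h
      apply ih
      have hL : IntermediateField.adjoin F (f '' Set.Iio (n + 1)) ≤ constF (Δ (n + 1)) := by
        rw [IntermediateField.adjoin_le_iff]
        rintro _ ⟨j, hj, rfl⟩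
        have : j ≠ n + 1 := ne_of_lt hj
        simp [mem_constF, hΔ, this]
      have := charZero_intermediateField (IntermediateField.adjoin F (f '' Set.Iio (n + 1)))
      have hmem : v ∈ IntermediateField.adjoin (IntermediateField.adjoin F (f '' Set.Iio (n + 1)))
          {f (n + 1)} := by
        rw [← IntermediateField.mem_restrictScalars F, IntermediateField.adjoin_adjoin_left]
        convert h using 2
        ext x
        simp only [Set.mem_union, Set.mem_image, Set.mem_Iio, Set.mem_singleton_iff]
        constructor
        · rintro (⟨j, hj, rfl⟩ | rfl)
          · exact ⟨j, by omega, rfl⟩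
          · exact ⟨n + 1, by omega, rfl⟩
        · rintro ⟨j, hj, rfl⟩
          rcases Nat.lt_succ_iff_lt_or_eq.1 hj with h | rfl
          · exact Or.inl ⟨j, h, rfl⟩
          · exact Or.inr rfl
      obtain ⟨y, rfl⟩ := mem_range_of_derivation (extendConst (Δ (n + 1)) _ hL) hmem
        (by rw [extendConst_apply]; exact h0 _ (by omega))
        (by rw [extendConst_apply, hΔ]; simp)
      exact y.2
  refine key N (IntermediateField.adjoin.mono F _ _ (Set.image_mono ?_) hN)
  exact Set.Iio_subset_Iio (by omega)

/-- Two generators of the same simple transcendental extension differ by a Möbius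
transformation. -/
theorem exists_moebius {F E : Type*} [Field F] [Field E] [Algebra F E] {u v : E}
    (hu : Transcendental F u) (hv : v ∈ IntermediateField.adjoin F {u})
    (huv : u ∈ IntermediateField.adjoin F {v}) :
    ∃ a b c d : F, a * d - b * c ≠ 0 ∧ algebraMap F E c * u + algebraMap F E d ≠ 0 ∧
      v = (algebraMap F E a * u + algebraMap F E b) / (algebraMap F E c * u + algebraMap F E d) := by
  let ψ : RatFunc F →ₐ[F] E := (IntermediateField.adjoin F {u}).val.comp
    (RatFunc.algEquivOfTranscendental u hu).toAlgHom
  have hψX : ψ RatFunc.X = u := RatFunc.algEquivOfTranscendental_X u hu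
  obtain ⟨f, hf⟩ := (RatFunc.algEquivOfTranscendental u hu).surjective ⟨v, hv⟩
  have hψf : ψ f = v := congrArg Subtype.val hf
  have htop : IntermediateField.adjoin F {f} = ⊤ := by
    rw [← top_le_iff, ← RatFunc.adjoin_X, IntermediateField.adjoin_le_iff,
      Set.singleton_subset_iff]
    have : u ∈ (IntermediateField.adjoin F {f}).map ψ := by
      rw [IntermediateField.adjoin_map, Set.image_singleton, hψf]
      exact huv
    obtain ⟨y, hy, hyu⟩ := this
    have : y = RatFunc.X := ψ.injective (hyu.trans hψX.symm)
    exact this ▸ hy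
  have hdeg := RatFunc.finrank_eq_max_natDegree f
  rw [htop, IntermediateField.finrank_top] at hdeg
  obtain ⟨a, b, hab⟩ := Polynomial.exists_eq_X_add_C_of_natDegree_le_one
    (p := f.num) (by omega)
  obtain ⟨c, d, hcd⟩ := Polynomial.exists_eq_X_add_C_of_natDegree_le_one
    (p := f.denom) (by omega)
  have hv' : v = Polynomial.aeval u f.num / Polynomial.aeval u f.denom := by
    rw [← RatFunc.algEquivOfTranscendental_apply u hu f, hf]
  have hne : Polynomial.aeval u f.denom ≠ 0 := by
    intro h
    exact f.denom_ne_zero ((transcendental_iff.1 hu) _ h)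
  have hv2 : v * Polynomial.aeval u f.denom = Polynomial.aeval u f.num := by
    rw [hv', div_mul_cancel₀ _ hne]
  have hn : Polynomial.aeval u f.num = algebraMap F E a * u + algebraMap F E b := by
    rw [hab]; simp
  have hd : Polynomial.aeval u f.denom = algebraMap F E c * u + algebraMap F E d := by
    rw [hcd]; simp
  rw [hn, hd] at hv' hv2
  rw [hd] at hne
  refine ⟨a, b, c, d, ?_, hne, hv'⟩
  -- If `a d = b c`, then `v` is a constant, and `u ∈ F(v) = F` is impossible.
  intro hdet
  have hvF : ∃ r : F, v = algebraMap F E r := by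
    by_cases hc : c = 0
    · subst hc
      have hd0 : d ≠ 0 := by rintro rfl; simp at hne
      have ha : a = 0 := by simpa [hd0] using hdet
      subst ha
      exact ⟨b / d, by rw [hv']; simp⟩
    · have hc' : algebraMap F E c ≠ 0 := by simpa using hc
      refine ⟨a / c, ?_⟩
      rw [map_div₀, eq_div_iff hc']
      have hdet' : algebraMap F E a * algebraMap F E d - algebraMap F E b * algebraMap F E c = 0 := by
        simpa using congrArg (algebraMap F E) hdet
      apply mul_right_cancel₀ hne
      linear_combination (algebraMap F E c) * hv2 - hdet'
  obtain ⟨r, rfl⟩ := hvF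
  rw [IntermediateField.adjoin_simple_eq_bot_iff.2 (IntermediateField.algebraMap_mem ⊥ r)] at huv
  obtain ⟨y, rfl⟩ := IntermediateField.mem_bot.1 huv
  exact hu (isAlgebraic_algebraMap y)

/-! ### The dual derivations on `F⟨u⟩` -/

theorem genDF_singleton {F E : Type*} [Field F] [Field E] [Algebra F E] (D : Derivation ℤ E E)
    (u : E) : genDF F D {u} = IntermediateField.adjoin F (Set.range fun k : ℕ => (⇑D)^[k] u) := by
  simp [genDF, Set.range]

theorem iterate_mem_genDF {F E : Type*} [Field F] [Field E] [Algebra F E] (D : Derivation ℤ E E)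
    {S : Set E} {u : E} (hu : u ∈ S) (k : ℕ) : (⇑D)^[k] u ∈ genDF F D S :=
  IntermediateField.subset_adjoin _ _ ⟨u, hu, k, rfl⟩

theorem mem_genDF {F E : Type*} [Field F] [Field E] [Algebra F E] (D : Derivation ℤ E E)
    {S : Set E} {u : E} (hu : u ∈ S) : u ∈ genDF F D S := iterate_mem_genDF D hu 0

/-- `F⟨S⟩` is closed under `D`. -/
theorem genDF_deriv_mem {F E : Type*} [Field F] [Field E] [Algebra F E] {δF : Derivation ℤ F F}
    {D : Derivation ℤ E E} (hD : ∀ a : F, D (algebraMap F E a) = algebraMap F E (δF a))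
    {S : Set E} {x : E} (hx : x ∈ genDF F D S) : D x ∈ genDF F D S := by
  induction hx using IntermediateField.adjoin_induction with
  | mem x hx =>
    obtain ⟨s, hs, k, rfl⟩ := hx
    exact Function.iterate_succ_apply' (⇑D) k s ▸ iterate_mem_genDF D hs (k + 1)
  | algebraMap a => rw [hD]; exact IntermediateField.algebraMap_mem _ _
  | add x y _ _ hx hy => rw [map_add]; exact add_mem hx hy
  | inv x hx' hx =>
    rw [Derivation.leibniz_inv]
    exact mul_mem (neg_mem (pow_mem (inv_mem hx') 2)) hx
  | mul x y hx' hy' hx hy =>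
    rw [Derivation.leibniz]
    exact add_mem (mul_mem hx' hy) (mul_mem hy' hx)

theorem genDF_iterate_mem {F E : Type*} [Field F] [Field E] [Algebra F E] {δF : Derivation ℤ F F}
    {D : Derivation ℤ E E} (hD : ∀ a : F, D (algebraMap F E a) = algebraMap F E (δF a))
    {S : Set E} {x : E} (hx : x ∈ genDF F D S) (k : ℕ) : (⇑D)^[k] x ∈ genDF F D S := by
  induction k with
  | zero => exact hx
  | succ k ih => rw [Function.iterate_succ_apply']; exact genDF_deriv_mem hD ih

theorem genDF_le {F E : Type*} [Field F] [Field E] [Algebra F E] {δF : Derivation ℤ F F}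
    {D : Derivation ℤ E E} (hD : ∀ a : F, D (algebraMap F E a) = algebraMap F E (δF a))
    {S T : Set E} (h : S ⊆ genDF F D T) : genDF F D S ≤ genDF F D T := by
  rw [genDF, IntermediateField.adjoin_le_iff]
  rintro _ ⟨s, hs, k, rfl⟩
  exact genDF_iterate_mem hD (h hs) k

/-- Two derivations agreeing on `F` and on `S` agree on `F(S)`. -/
theorem deriv_eqOn_adjoin {F E : Type*} [Field F] [Field E] [Algebra F E]
    (Δ Δ' : Derivation ℤ E E) {S : Set E}
    (hF : ∀ a : F, Δ (algebraMap F E a) = Δ' (algebraMap F E a)) (hS : ∀ s ∈ S, Δ s = Δ' s)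
    {x : E} (hx : x ∈ IntermediateField.adjoin F S) : Δ x = Δ' x := by
  induction hx using IntermediateField.adjoin_induction with
  | mem x hx => exact hS x hx
  | algebraMap a => exact hF a
  | add x y _ _ hx hy => rw [map_add, map_add, hx, hy]
  | inv x _ hx => rw [Derivation.leibniz_inv, Derivation.leibniz_inv, hx]
  | mul x y _ _ hx hy => rw [Derivation.leibniz, Derivation.leibniz, hx, hy]

/-- The family `Δ` of `F`-derivations of `E` is dual to `(D^j u)_j`, so that `Δ k` restricts to
`∂/∂u_k` on `F⟨u⟩`. Outside `F⟨u⟩` the values of `Δ k` are not constrained. -/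
def IsDual {F E : Type*} [Field F] [Field E] [Algebra F E] (D : Derivation ℤ E E) (u : E)
    (Δ : ℕ → Derivation F E E) : Prop :=
  ∀ k j, Δ k ((⇑D)^[j] u) = if j = k then 1 else 0

theorem exists_isDual {F E : Type*} [Field F] [Field E] [Algebra F E] [CharZero F]
    {D : Derivation ℤ E E} {u : E} (hu : DiffTrans F D u) :
    ∃ Δ : ℕ → Derivation F E E, IsDual D u Δ := by
  have := fun k : ℕ => exists_derivation hu (fun j => if j = k then 1 else 0)
  choose Δ h using this
  exact ⟨Δ, h⟩

/-- The relations `[∂/∂u_0, D] = 0` and `[∂/∂u_{k+1}, D] = ∂/∂u_k` on `F⟨u⟩`. -/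
theorem dual_deriv {F E : Type*} [Field F] [Field E] [Algebra F E] {δF : Derivation ℤ F F}
    {D : Derivation ℤ E E} (hD : ∀ a : F, D (algebraMap F E a) = algebraMap F E (δF a))
    {u : E} {Δ : ℕ → Derivation F E E} (hΔ : IsDual D u Δ) {x : E} (hx : x ∈ genDF F D {u}) :
    Δ 0 (D x) = D (Δ 0 x) ∧ ∀ k, Δ (k + 1) (D x) = D (Δ (k + 1) x) + Δ k x := by
  rw [genDF_singleton] at hx
  have hit : ∀ j, D ((⇑D)^[j] u) = (⇑D)^[j + 1] u := fun j =>
    (Function.iterate_succ_apply' _ _ _).symm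
  have hconst : ∀ k j, D (Δ k ((⇑D)^[j] u)) = 0 := by
    intro k j
    rw [hΔ]
    split_ifs <;> simp
  constructor
  · have := deriv_eqOn_adjoin (F := F) ⁅(Δ 0).restrictScalars ℤ, D⁆ 0
      (by intro a; simp [Derivation.commutator_apply, hD])
      (by
        rintro _ ⟨j, rfl⟩
        simp only [Derivation.commutator_apply, Derivation.restrictScalars_apply, hit, hconst]
        simp only [hΔ _ _]
        simp) hx
    simpa [Derivation.commutator_apply, sub_eq_zero] using this
  · intro k
    have := deriv_eqOn_adjoin (F := F) ⁅(Δ (k + 1)).restrictScalars ℤ, D⁆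
      ((Δ k).restrictScalars ℤ)
      (by intro a; simp [Derivation.commutator_apply, hD])
      (by
        rintro _ ⟨j, rfl⟩
        simp only [Derivation.commutator_apply, Derivation.restrictScalars_apply, hit, hconst]
        simp only [hΔ _ _]
        simp) hx
    simp only [Derivation.commutator_apply, Derivation.restrictScalars_apply] at this
    linear_combination this

/-- If `v` has order at most `m` in `u`, then `D^k v` has order at most `m + k`, and
`∂(D^k v)/∂u_{m+k} = ∂v/∂u_m`. -/
theorem dual_iterate {F E : Type*} [Field F] [Field E] [Algebra F E] {δF : Derivation ℤ F F}
    {D : Derivation ℤ E E} (hD : ∀ a : F, D (algebraMap F E a) = algebraMap F E (δF a))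
    {u : E} {Δ : ℕ → Derivation F E E} (hΔ : IsDual D u Δ) {v : E} (hv : v ∈ genDF F D {u})
    {m : ℕ} (hm : ∀ j, m < j → Δ j v = 0) (k : ℕ) :
    (∀ j, m + k < j → Δ j ((⇑D)^[k] v) = 0) ∧ Δ (m + k) ((⇑D)^[k] v) = Δ m v := by
  induction k with
  | zero => exact ⟨hm, rfl⟩
  | succ k ih =>
    have hK := (dual_deriv hD hΔ (genDF_iterate_mem hD hv k)).2
    simp only [Function.iterate_succ_apply']
    constructor
    · intro j hj
      obtain ⟨j, rfl⟩ : ∃ i, j = i + 1 := ⟨j - 1, by omega⟩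
      rw [hK, ih.1 _ (by omega), ih.1 _ (by omega)]
      simp
    · rw [← add_assoc, hK, ih.1 _ (by omega), ih.2]
      simp

/-- An element of `F⟨u⟩` has finite order in `u`. -/
theorem dual_finite {F E : Type*} [Field F] [Field E] [Algebra F E]
    {D : Derivation ℤ E E} {u : E} {Δ : ℕ → Derivation F E E} (hΔ : IsDual D u Δ) {v : E}
    (hv : v ∈ genDF F D {u}) : ∃ m, ∀ j, m < j → Δ j v = 0 := by
  rw [genDF_singleton] at hv
  induction hv using IntermediateField.adjoin_induction with
  | mem x hx =>
    obtain ⟨k, rfl⟩ := hx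
    exact ⟨k, fun j hj => by rw [hΔ, if_neg (by omega)]⟩
  | algebraMap a => exact ⟨0, fun j _ => Derivation.map_algebraMap _ _⟩
  | add x y _ _ hx hy =>
    obtain ⟨m, hm⟩ := hx
    obtain ⟨n, hn⟩ := hy
    refine ⟨max m n, fun j hj => ?_⟩
    rw [map_add, hm j (by omega), hn j (by omega), add_zero]
  | inv x _ hx =>
    obtain ⟨m, hm⟩ := hx
    exact ⟨m, fun j hj => by rw [Derivation.leibniz_inv, hm j hj, smul_zero]⟩
  | mul x y _ _ hx hy =>
    obtain ⟨m, hm⟩ := hx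
    obtain ⟨n, hn⟩ := hy
    refine ⟨max m n, fun j hj => ?_⟩
    rw [Derivation.leibniz, hm j (by omega), hn j (by omega), smul_zero, smul_zero, add_zero]

/-- If `F⟨u⟩ = F⟨v⟩`, then `v` has order `0` in `u`: otherwise the dual derivations, of
arbitrarily high order in `u`, can be combined into one that sees `u` but kills as many
derivatives of `v` as needed. -/
theorem dual_eq_zero {F E : Type*} [Field F] [Field E] [Algebra F E] {δF : Derivation ℤ F F}
    {D : Derivation ℤ E E} (hD : ∀ a : F, D (algebraMap F E a) = algebraMap F E (δF a))
    {u : E} {Δ : ℕ → Derivation F E E} (hΔ : IsDual D u Δ) {v : E} (hv : v ∈ genDF F D {u})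
    (huv : u ∈ genDF F D {v}) (j : ℕ) (hj : 1 ≤ j) : Δ j v = 0 := by
  by_contra hne
  obtain ⟨M, hM⟩ := dual_finite hΔ hv
  obtain ⟨m, hm1, hmne, hm⟩ : ∃ m, 1 ≤ m ∧ Δ m v ≠ 0 ∧ ∀ j, m < j → Δ j v = 0 := by
    classical
    have hjM : j ≤ M := by
      by_contra h
      exact hne (hM j (by omega))
    refine ⟨Nat.findGreatest (fun i => Δ i v ≠ 0) M, hj.trans (Nat.le_findGreatest hjM hne),
      Nat.findGreatest_spec (P := fun i => Δ i v ≠ 0) hjM hne, fun i hi => ?_⟩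
    by_cases hiM : i ≤ M
    · exact not_not.1 (Nat.findGreatest_is_greatest hi hiM)
    · exact hM i (by omega)
  have hΘ : ∀ N, ∃ Θ : Derivation F E E, Θ u = 1 ∧ ∀ l < N, Θ ((⇑D)^[l] v) = 0 := by
    intro N
    induction N with
    | zero => exact ⟨Δ 0, by simpa using hΔ 0 0, by simp⟩
    | succ N ih =>
      obtain ⟨Θ, h1, h0⟩ := ih
      -- `Δ (m + N)` kills `u` since `m ≥ 1`, kills `D^l v` for `l < N`, and equals `Δ m v ≠ 0` on
      -- `D^N v`.
      refine ⟨Θ - (Θ ((⇑D)^[N] v) / Δ m v) • Δ (m + N), ?_, fun l hl => ?_⟩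
      · have h2 : Δ (m + N) u = 0 := by
          have := hΔ (m + N) 0
          rwa [if_neg (by omega)] at this
        simp [h1, h2]
      · rcases Nat.lt_succ_iff_lt_or_eq.1 hl with hl | rfl
        · simp [h0 l hl, (dual_iterate hD hΔ hv hm l).1 (m + N) (by omega)]
        · simp [(dual_iterate hD hΔ hv hm l).2, hmne]
  rw [genDF_singleton] at huv
  obtain ⟨N, hN⟩ := mem_adjoin_image_Iio _ huv
  obtain ⟨Θ, h1, h0⟩ := hΘ N
  have hle : IntermediateField.adjoin F ((fun k : ℕ => (⇑D)^[k] v) '' Set.Iio N) ≤ constF Θ := by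
    rw [IntermediateField.adjoin_le_iff]
    rintro _ ⟨l, hl, rfl⟩
    exact h0 l hl
  have : Θ u = 0 := hle hN
  exact one_ne_zero (h1.symm.trans this)

/-- If `F⟨u⟩ = F⟨v⟩`, then `v ∈ F(u)`. -/
theorem mem_adjoin_of_genDF_eq {F E : Type*} [Field F] [Field E] [Algebra F E] [CharZero F]
    {δF : Derivation ℤ F F} {D : Derivation ℤ E E}
    (hD : ∀ a : F, D (algebraMap F E a) = algebraMap F E (δF a))
    {u v : E} (hu : DiffTrans F D u) (hv : v ∈ genDF F D {u}) (huv : u ∈ genDF F D {v}) :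
    v ∈ IntermediateField.adjoin F {u} := by
  obtain ⟨Δ, hΔ⟩ := exists_isDual hu
  exact mem_adjoin_zero_of_dual (fun k : ℕ => (⇑D)^[k] u) Δ hΔ (by rwa [genDF_singleton] at hv)
    (dual_eq_zero hD hΔ hv huv)

theorem diffTrans_transcendental {F E : Type*} [Field F] [Field E] [Algebra F E]
    {D : Derivation ℤ E E} {u : E} (hu : DiffTrans F D u) : Transcendental F u :=
  AlgebraicIndependent.transcendental hu 0

/-- If `v` has order exactly `0` in `u`, then `v` is differentially transcendental. -/
theorem diffTrans_of_dual {F E : Type*} [Field F] [Field E] [Algebra F E] [CharZero F]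
    {δF : Derivation ℤ F F} {D : Derivation ℤ E E}
    (hD : ∀ a : F, D (algebraMap F E a) = algebraMap F E (δF a))
    {u : E} {Δ : ℕ → Derivation F E E} (hΔ : IsDual D u Δ) {v : E} (hv : v ∈ genDF F D {u})
    (h0 : Δ 0 v ≠ 0) (h1 : ∀ j, 0 < j → Δ j v = 0) : DiffTrans F D v := by
  have hit := dual_iterate hD hΔ hv h1
  simp only [zero_add] at hit
  have key : ∀ n : ℕ, AlgebraicIndepOn F (fun k : ℕ => (⇑D)^[k] v) (Set.Iio n) := by
    intro n
    induction n with
    | zero =>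
      have : IsEmpty (Set.Iio 0 : Set ℕ) := by simp
      exact algebraicIndependent_empty_type_iff.2 (algebraMap F E).injective
    | succ n ih =>
      have hins : Set.Iio (n + 1) = insert n (Set.Iio n) := by
        ext
        simp only [Set.mem_Iio, Set.mem_insert_iff]
        omega
      rw [hins]
      refine ih.insert ?_
      -- `Δ n` kills the earlier derivatives of `v`; if `D^n v` were algebraic over them, `Δ n`
      -- would kill it as well.
      intro halg
      obtain ⟨p, hp0, hp⟩ := halg
      have hle : Algebra.adjoin F ((fun k : ℕ => (⇑D)^[k] v) '' Set.Iio n) ≤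
          (constF (Δ n)).toSubalgebra := by
        rw [Algebra.adjoin_le_iff]
        rintro _ ⟨j, hj, rfl⟩
        exact (hit j).1 n hj
      let ι : Algebra.adjoin F ((fun k : ℕ => (⇑D)^[k] v) '' Set.Iio n) →+* constF (Δ n) :=
        (Subalgebra.inclusion hle).toRingHom
      have hι : Function.Injective ι := Subalgebra.inclusion_injective hle
      have : Δ n ((⇑D)^[n] v) = 0 := by
        refine isAlgebraic_constF (Δ n) ⟨p.map ι, (Polynomial.map_ne_zero_iff hι).2 hp0, ?_⟩
        rw [Polynomial.aeval_def, Polynomial.eval₂_map]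
        exact hp
      exact h0 ((hit n).2.symm.trans this)
  refine algebraicIndependent_of_finite_type fun t ht => ?_
  obtain ⟨N, hN⟩ := ht.bddAbove
  have hsub : t ⊆ Set.Iio (N + 1) := fun i hi => Nat.lt_succ_of_le (hN hi)
  exact (key (N + 1)).comp (Set.inclusion hsub) (Set.inclusion_injective hsub)

/-! ### Differential homomorphisms -/

open scoped IntermediateField.algebraAdjoinAdjoin in
/-- Families satisfying the same polynomial relations over `F` generate fields related by an
`F`-homomorphism. -/
theorem exists_algHom {F E ι : Type*} [Field F] [Field E] [Algebra F E] (a b : ι → E)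
    (hab : ∀ B : MvPolynomial ι F, aeval a B = 0 ↔ aeval b B = 0) :
    ∃ φ : IntermediateField.adjoin F (Set.range a) →ₐ[F] E,
      ∀ i (h : a i ∈ IntermediateField.adjoin F (Set.range a)), φ ⟨a i, h⟩ = b i := by
  let f : MvPolynomial ι F →ₐ[F] Algebra.adjoin F (Set.range a) :=
    aeval fun i => ⟨a i, Algebra.subset_adjoin ⟨i, rfl⟩⟩
  have hfa : ∀ B, (f B : E) = aeval a B := by
    intro B
    have : (Algebra.adjoin F (Set.range a)).val.comp f = aeval a := by
      ext i
      simp [f]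
    exact AlgHom.congr_fun this B
  have hf : Function.Surjective f := by
    rintro ⟨y, hy⟩
    rw [Algebra.adjoin_range_eq_range_aeval] at hy
    obtain ⟨B, hB⟩ := hy
    exact ⟨B, Subtype.ext ((hfa B).trans hB)⟩
  have hker : RingHom.ker f.toRingHom ≤ RingHom.ker (aeval b : MvPolynomial ι F →ₐ[F] E).toRingHom := by
    intro B hB
    have h1 : f B = 0 := hB
    have h2 : aeval a B = 0 := by rw [← hfa, h1]; rfl
    exact (hab B).1 h2
  let g : Algebra.adjoin F (Set.range a) →ₐ[F] E := AlgHom.liftOfSurjective f hf (aeval b) hker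
  have hgf : ∀ B, g (f B) = aeval b B := fun B => AlgHom.liftOfSurjective_apply ..
  have hg : Function.Injective g := by
    rw [injective_iff_map_eq_zero]
    intro y hy
    obtain ⟨B, rfl⟩ := hf y
    rw [hgf] at hy
    exact Subtype.ext ((hfa B).trans ((hab B).2 hy))
  refine ⟨IsFractionRing.liftAlgHom (K := IntermediateField.adjoin F (Set.range a)) hg, ?_⟩
  intro i h
  have h1 : g (f (X i)) = b i := by rw [hgf, aeval_X]
  rw [← h1]
  have h2 : (⟨a i, h⟩ : IntermediateField.adjoin F (Set.range a)) =
    algebraMap (Algebra.adjoin F (Set.range a)) _ (f (X i)) := by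
    apply Subtype.ext
    simp [f]
  rw [h2]
  simp

/-- The derivation that `D` induces on `F⟨S⟩`. -/
def derivK {F E : Type*} [Field F] [Field E] [Algebra F E] {δF : Derivation ℤ F F}
    {D : Derivation ℤ E E} (hD : ∀ a : F, D (algebraMap F E a) = algebraMap F E (δF a))
    (S : Set E) : Derivation ℤ (genDF F D S) (genDF F D S) :=
  Derivation.mk'
    (AddMonoidHom.toIntLinearMap
      { toFun := fun x => ⟨D x, genDF_deriv_mem hD x.2⟩
        map_zero' := Subtype.ext (map_zero D)
        map_add' := fun x y => Subtype.ext (map_add D (x : E) y) })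
    (fun x y => Subtype.ext (D.leibniz (x : E) y))

theorem coe_derivK {F E : Type*} [Field F] [Field E] [Algebra F E] {δF : Derivation ℤ F F}
    {D : Derivation ℤ E E} (hD : ∀ a : F, D (algebraMap F E a) = algebraMap F E (δF a))
    (S : Set E) (x : genDF F D S) : (derivK hD S x : E) = D x := rfl

theorem coe_derivK_iterate {F E : Type*} [Field F] [Field E] [Algebra F E] {δF : Derivation ℤ F F}
    {D : Derivation ℤ E E} (hD : ∀ a : F, D (algebraMap F E a) = algebraMap F E (δF a))
    (S : Set E) (k : ℕ) (x : genDF F D S) :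
    (((⇑(derivK hD S))^[k] x : genDF F D S) : E) = (⇑D)^[k] x := by
  induction k with
  | zero => rfl
  | succ k ih => rw [Function.iterate_succ_apply', Function.iterate_succ_apply', coe_derivK, ih]

theorem derivK_algebraMap {F E : Type*} [Field F] [Field E] [Algebra F E] {δF : Derivation ℤ F F}
    {D : Derivation ℤ E E} (hD : ∀ a : F, D (algebraMap F E a) = algebraMap F E (δF a))
    (S : Set E) (a : F) : derivK hD S (algebraMap F _ a) = algebraMap F _ (δF a) :=
  Subtype.ext (hD a)

/-- A homomorphism out of `F⟨S⟩` that is compatible with the iterated derivatives of the elements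
of `S` commutes with the derivations. -/
theorem algHom_deriv {F E : Type*} [Field F] [Field E] [Algebra F E] {δF : Derivation ℤ F F}
    {D : Derivation ℤ E E} (hD : ∀ a : F, D (algebraMap F E a) = algebraMap F E (δF a))
    {S : Set E} (φ : genDF F D S →ₐ[F] E)
    (hφ : ∀ (s : genDF F D S), (s : E) ∈ S → ∀ k, φ ((⇑(derivK hD S))^[k] s) = (⇑D)^[k] (φ s))
    (x : genDF F D S) : φ (derivK hD S x) = D (φ x) := by
  obtain ⟨x, hx⟩ := x
  have hx0 := hx
  unfold genDF at hx0
  suffices ∀ h : x ∈ genDF F D S, φ (derivK hD S ⟨x, h⟩) = D (φ ⟨x, h⟩) from this hx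
  clear hx
  induction hx0 using IntermediateField.adjoin_induction with
  | mem x hx =>
    intro h
    obtain ⟨s, hs, k, rfl⟩ := hx
    have h1 : (⟨(⇑D)^[k] s, h⟩ : genDF F D S) = (⇑(derivK hD S))^[k] ⟨s, mem_genDF D hs⟩ :=
      Subtype.ext (coe_derivK_iterate hD S k ⟨s, mem_genDF D hs⟩).symm
    rw [h1, ← Function.iterate_succ_apply' (⇑(derivK hD S)), hφ _ hs, hφ _ hs,
      Function.iterate_succ_apply']
  | algebraMap a =>
    intro h
    change φ (derivK hD S (algebraMap F _ a)) = D (φ (algebraMap F _ a))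
    rw [derivK_algebraMap, φ.commutes, φ.commutes, hD]
  | add x y hx' hy' hx hy =>
    intro h
    change φ (derivK hD S (⟨x, hx'⟩ + ⟨y, hy'⟩)) = D (φ (⟨x, hx'⟩ + ⟨y, hy'⟩))
    simp only [map_add]
    exact congrArg₂ (· + ·) (hx hx') (hy hy')
  | inv x hx' hx =>
    intro h
    change φ (derivK hD S (⟨x, hx'⟩⁻¹)) = D (φ (⟨x, hx'⟩⁻¹))
    have := hx hx'
    simp only [Derivation.leibniz_inv, map_inv₀, smul_eq_mul, map_mul, map_neg, map_pow]
    exact congrArg _ this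
  | mul x y hx' hy' hx hy =>
    intro h
    change φ (derivK hD S (⟨x, hx'⟩ * ⟨y, hy'⟩)) = D (φ (⟨x, hx'⟩ * ⟨y, hy'⟩))
    have h1 := hx hx'
    have h2 := hy hy'
    simp only [Derivation.leibniz, smul_eq_mul, map_mul, map_add]
    exact congrArg₂ (· + ·) (congrArg _ h2) (congrArg _ h1)

theorem algHom_deriv_iterate {F E : Type*} [Field F] [Field E] [Algebra F E]
    {δF : Derivation ℤ F F} {D : Derivation ℤ E E}
    (hD : ∀ a : F, D (algebraMap F E a) = algebraMap F E (δF a)) {S : Set E}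
    {φ : genDF F D S →ₐ[F] E} (hc : ∀ x, φ (derivK hD S x) = D (φ x)) (k : ℕ) (x : genDF F D S) :
    φ ((⇑(derivK hD S))^[k] x) = (⇑D)^[k] (φ x) := by
  induction k with
  | zero => rfl
  | succ k ih => rw [Function.iterate_succ_apply', Function.iterate_succ_apply', hc, ih]

/-- Tuples satisfying the same differential polynomial relations over `F` are related by a
differential `F`-homomorphism. -/
theorem exists_diffHom {F E ι : Type*} [Field F] [Field E] [Algebra F E]
    {δF : Derivation ℤ F F} {D : Derivation ℤ E E}
    (hD : ∀ a : F, D (algebraMap F E a) = algebraMap F E (δF a)) (w w' : ι → E)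
    (hab : ∀ B : MvPolynomial (ι × ℕ) F, aeval (fun p => (⇑D)^[p.2] (w p.1)) B = 0 ↔
      aeval (fun p => (⇑D)^[p.2] (w' p.1)) B = 0) {S : Set E} (hS : S = Set.range w) :
    ∃ φ : genDF F D S →ₐ[F] E, (∀ x, φ (derivK hD S x) = D (φ x)) ∧
      ∀ i (h : w i ∈ genDF F D S), φ ⟨w i, h⟩ = w' i := by
  have hrange : {x | ∃ s ∈ S, ∃ k : ℕ, (⇑D)^[k] s = x} =
      Set.range fun p : ι × ℕ => (⇑D)^[p.2] (w p.1) := by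
    ext x
    simp [hS]
  have h1 : ∃ φ : genDF F D S →ₐ[F] E, ∀ (p : ι × ℕ) (h : (⇑D)^[p.2] (w p.1) ∈ genDF F D S),
      φ ⟨(⇑D)^[p.2] (w p.1), h⟩ = (⇑D)^[p.2] (w' p.1) := by
    unfold genDF
    rw [hrange]
    exact exists_algHom _ _ hab
  obtain ⟨φ, hφ⟩ := h1
  refine ⟨φ, algHom_deriv hD φ ?_, fun i h => hφ (i, 0) h⟩
  rintro ⟨s, hs'⟩ hs k
  obtain ⟨i, rfl⟩ : s ∈ Set.range w := hS ▸ hs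
  have h0 : φ ⟨w i, hs'⟩ = w' i := hφ (i, 0) hs'
  have hk : (⇑(derivK hD S))^[k] ⟨w i, hs'⟩ =
      ⟨(⇑D)^[k] (w i), genDF_iterate_mem hD hs' k⟩ := Subtype.ext (coe_derivK_iterate hD S k ⟨w i, hs'⟩)
  rw [hk, h0]
  exact hφ (i, k) _

/-- A differential homomorphism maps `F⟨T⟩` into `F⟨T'⟩` as soon as it maps `T` there. -/
theorem map_mem_genDF {F E : Type*} [Field F] [Field E] [Algebra F E]
    {δF : Derivation ℤ F F} {D : Derivation ℤ E E}
    (hD : ∀ a : F, D (algebraMap F E a) = algebraMap F E (δF a)) {S : Set E}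
    {φ : genDF F D S →ₐ[F] E} (hc : ∀ x, φ (derivK hD S x) = D (φ x)) {T T' : Set E}
    (hT : ∀ t (h : t ∈ genDF F D S), t ∈ T → φ ⟨t, h⟩ ∈ genDF F D T') (hTS : T ⊆ genDF F D S)
    {y : genDF F D S} (hy : (y : E) ∈ genDF F D T) :
    φ y ∈ genDF F D T' := by
  obtain ⟨y, hyS⟩ := y
  change y ∈ genDF F D T at hy
  have hle := genDF_le hD hTS
  have hy0 := hy
  unfold genDF at hy0
  suffices ∀ h : y ∈ genDF F D S, φ ⟨y, h⟩ ∈ genDF F D T' from this hyS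
  clear hyS hy
  induction hy0 using IntermediateField.adjoin_induction with
  | mem x hx =>
    intro h
    obtain ⟨s, hs, k, rfl⟩ := hx
    have h1 : (⟨(⇑D)^[k] s, h⟩ : genDF F D S) = (⇑(derivK hD S))^[k] ⟨s, hTS hs⟩ :=
      Subtype.ext (coe_derivK_iterate hD S k ⟨s, hTS hs⟩).symm
    rw [h1, algHom_deriv_iterate hD hc]
    exact genDF_iterate_mem hD (hT s _ hs) k
  | algebraMap a =>
    intro h
    change φ (algebraMap F _ a) ∈ _
    rw [φ.commutes]
    exact IntermediateField.algebraMap_mem _ _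
  | add x y hx' hy' hx hy =>
    intro h
    have h1 := add_mem (hx (hle hx')) (hy (hle hy'))
    rw [← map_add] at h1
    exact h1
  | inv x hx' hx =>
    intro h
    have h1 := inv_mem (hx (hle hx'))
    rw [← map_inv₀] at h1
    exact h1
  | mul x y hx' hy' hx hy =>
    intro h
    have h1 := mul_mem (hx (hle hx')) (hy (hle hy'))
    rw [← map_mul] at h1
    exact h1

theorem map_evalD {F E : Type*} [Field F] [Field E] [Algebra F E]
    {δF : Derivation ℤ F F} {D : Derivation ℤ E E}
    (hD : ∀ a : F, D (algebraMap F E a) = algebraMap F E (δF a)) {S : Set E}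
    {φ : genDF F D S →ₐ[F] E} (hc : ∀ x, φ (derivK hD S x) = D (φ x)) (x : genDF F D S)
    (P : MvPolynomial ℕ F) : ∃ h : evalD F D (x : E) P ∈ genDF F D S,
      φ ⟨evalD F D (x : E) P, h⟩ = evalD F D (φ x) P := by
  have h1 : ∀ ψ : genDF F D S →ₐ[F] E, (∀ x, ψ (derivK hD S x) = D (ψ x)) →
      ψ (aeval (fun k : ℕ => (⇑(derivK hD S))^[k] x) P) = evalD F D (ψ x) P := by
    intro ψ hψ
    rw [comp_aeval_apply, evalD]
    simp only [algHom_deriv_iterate hD hψ]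
  have h2 : ((aeval (fun k : ℕ => (⇑(derivK hD S))^[k] x) P : genDF F D S) : E) =
    evalD F D (x : E) P := h1 (genDF F D S).val (coe_derivK hD S)
  refine ⟨h2 ▸ SetLike.coe_mem _, ?_⟩
  rw [← h1 φ hc]
  exact congrArg φ (Subtype.ext h2.symm)

theorem map_evalD2 {F E : Type*} [Field F] [Field E] [Algebra F E]
    {δF : Derivation ℤ F F} {D : Derivation ℤ E E}
    (hD : ∀ a : F, D (algebraMap F E a) = algebraMap F E (δF a)) {S : Set E}
    {φ : genDF F D S →ₐ[F] E} (hc : ∀ x, φ (derivK hD S x) = D (φ x)) (x y : genDF F D S)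
    (B : MvPolynomial (Fin 2 × ℕ) F) :
    evalD2 F D (φ x) (φ y) B = 0 ↔ evalD2 F D (x : E) (y : E) B = 0 := by
  have h1 : ∀ ψ : genDF F D S →ₐ[F] E, (∀ x, ψ (derivK hD S x) = D (ψ x)) →
      ψ (aeval (fun p : Fin 2 × ℕ => (⇑(derivK hD S))^[p.2] (if p.1 = 0 then x else y)) B) =
        evalD2 F D (ψ x) (ψ y) B := by
    intro ψ hψ
    rw [comp_aeval_apply, evalD2]
    simp only [algHom_deriv_iterate hD hψ, apply_ite ψ]
  have h2 := h1 (genDF F D S).val (coe_derivK hD S)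
  rw [IntermediateField.coe_val] at h2
  rw [← h1 φ hc, ← h2, map_eq_zero]
  exact (map_eq_zero (genDF F D S).val).symm

theorem map_diffTrans {F E : Type*} [Field F] [Field E] [Algebra F E]
    {δF : Derivation ℤ F F} {D : Derivation ℤ E E}
    (hD : ∀ a : F, D (algebraMap F E a) = algebraMap F E (δF a)) {S : Set E}
    {φ : genDF F D S →ₐ[F] E} (hc : ∀ x, φ (derivK hD S x) = D (φ x)) {x : genDF F D S}
    (hx : DiffTrans F D (x : E)) : DiffTrans F D (φ x) := by
  have h1 : AlgebraicIndependent F fun k : ℕ => (⇑(derivK hD S))^[k] x := by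
    refine AlgebraicIndependent.of_comp (genDF F D S).val ?_
    have h0 : (genDF F D S).val ∘ (fun k : ℕ => (⇑(derivK hD S))^[k] x) =
        fun k : ℕ => (⇑D)^[k] (x : E) := funext fun k => coe_derivK_iterate hD S k x
    rw [h0]
    exact hx
  have h2 := h1.map' (f := φ) φ.injective
  have h3 : φ ∘ (fun k : ℕ => (⇑(derivK hD S))^[k] x) = fun k : ℕ => (⇑D)^[k] (φ x) :=
    funext fun k => algHom_deriv_iterate hD hc k x
  rwa [h3] at h2

/-! ### Generic points of the same ideal -/

/-- Two proper generic points of the same ideal are related by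
a differential isomorphism of `F⟨u⟩`, which is a Möbius transformation on `u`. -/
theorem exists_moebius_hom {F E : Type*} [Field F] [Field E] [Algebra F E] [CharZero F]
    {δF : Derivation ℤ F F} {D : Derivation ℤ E E}
    (hD : ∀ a : F, D (algebraMap F E a) = algebraMap F E (δF a)) {u η₁ η₂ θ₁ θ₂ : E}
    (hu : DiffTrans F D u) (hη : genDF F D {η₁, η₂} = genDF F D {u})
    (hθ : genDF F D {θ₁, θ₂} = genDF F D {u})
    (hB : ∀ B, evalD2 F D η₁ η₂ B = 0 ↔ evalD2 F D θ₁ θ₂ B = 0) :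
    ∃ (v : E) (φ : genDF F D {u} →ₐ[F] E), (∀ x, φ (derivK hD {u} x) = D (φ x)) ∧
      (∀ h, φ ⟨u, h⟩ = v) ∧ (∀ h, φ ⟨η₁, h⟩ = θ₁) ∧ (∀ h, φ ⟨η₂, h⟩ = θ₂) ∧
      ∃ a b c d : F, a * d - b * c ≠ 0 ∧ algebraMap F E c * u + algebraMap F E d ≠ 0 ∧
      v = (algebraMap F E a * u + algebraMap F E b) /
        (algebraMap F E c * u + algebraMap F E d) := by
  have hS : ({η₁, η₂} : Set E) = Set.range fun i : Fin 2 => if i = 0 then η₁ else η₂ := by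
    ext x
    simp [Fin.exists_fin_two, eq_comm]
  have hex : ∃ φ : genDF F D {u} →ₐ[F] E, (∀ x, φ (derivK hD {u} x) = D (φ x)) ∧
      (∀ h, φ ⟨η₁, h⟩ = θ₁) ∧ (∀ h, φ ⟨η₂, h⟩ = θ₂) := by
    obtain ⟨φ, hc, h⟩ := exists_diffHom hD (fun i : Fin 2 => if i = 0 then η₁ else η₂)
      (fun i : Fin 2 => if i = 0 then θ₁ else θ₂) hB hS
    refine ⟨φ.comp (IntermediateField.equivOfEq hη.symm).toAlgHom, fun x => ?_, fun h' => ?_,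
      fun h' => ?_⟩
    · exact hc ((IntermediateField.equivOfEq hη.symm) x)
    · exact h 0 _
    · exact h 1 _
  obtain ⟨φ, hc, h₁, h₂⟩ := hex
  have hu' : u ∈ genDF F D {u} := mem_genDF D rfl
  have hη₁ : η₁ ∈ genDF F D {u} := hη ▸ mem_genDF D (by simp)
  have hη₂ : η₂ ∈ genDF F D {u} := hη ▸ mem_genDF D (by simp)
  refine ⟨φ ⟨u, hu'⟩, φ, hc, fun _ => rfl, h₁, h₂, ?_⟩
  have hv : φ ⟨u, hu'⟩ ∈ genDF F D {u} := by
    refine hθ.le ?_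
    refine map_mem_genDF hD hc (T := {η₁, η₂}) ?_ ?_ (hη.ge hu')
    · rintro t h (rfl | rfl)
      · rw [h₁]; exact mem_genDF D (by simp)
      · rw [h₂]; exact mem_genDF D (by simp)
    · rintro t (rfl | rfl)
      · exact hη₁
      · exact hη₂
  have hmap : ∀ y : genDF F D {u}, φ y ∈ genDF F D {φ ⟨u, hu'⟩} := by
    intro y
    refine map_mem_genDF hD hc (T := {u}) ?_ (by simpa using hu') y.2
    rintro t h rfl
    exact mem_genDF D rfl
  have huv : u ∈ genDF F D {φ ⟨u, hu'⟩} := by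
    refine genDF_le hD ?_ (hθ ▸ hu')
    rintro t (rfl | rfl)
    · exact h₁ hη₁ ▸ hmap _
    · exact h₂ hη₂ ▸ hmap _
  exact exists_moebius (diffTrans_transcendental hu) (mem_adjoin_of_genDF_eq hD hu hv huv)
    (mem_adjoin_of_genDF_eq hD (map_diffTrans hD hc (x := ⟨u, hu'⟩) hu) huv hv)

/-! ### Möbius transforms of `u` -/

theorem moebius_denom_ne_zero {F E : Type*} [Field F] [Field E] [Algebra F E] {u : E}
    (hu : Transcendental F u) {a b c d : F} (h : a * d - b * c ≠ 0) :
    algebraMap F E c * u + algebraMap F E d ≠ 0 := by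
  intro h0
  by_cases hc : c = 0
  · subst hc
    have hd : d = 0 := by simpa using h0
    simp [hd] at h
  · have hc' : algebraMap F E c ≠ 0 := by simpa using hc
    have : u = algebraMap F E (-d / c) := by
      rw [map_div₀, map_neg, eq_div_iff hc']
      linear_combination h0
    exact hu (this ▸ isAlgebraic_algebraMap _)

/-- A Möbius transform of a differential transcendental `u` is a differential transcendental
generating the same differential field. -/
theorem moebius_genDF {F E : Type*} [Field F] [Field E] [Algebra F E] [CharZero F]
    {δF : Derivation ℤ F F} {D : Derivation ℤ E E}
    (hD : ∀ a : F, D (algebraMap F E a) = algebraMap F E (δF a)) {u v : E}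
    (hu : DiffTrans F D u) {a b c d : F} (h : a * d - b * c ≠ 0)
    (hv : v = (algebraMap F E a * u + algebraMap F E b) /
        (algebraMap F E c * u + algebraMap F E d)) :
    genDF F D {v} = genDF F D {u} ∧ DiffTrans F D v := by
  have hne := moebius_denom_ne_zero (diffTrans_transcendental hu) h
  have hv' : v * (algebraMap F E c * u + algebraMap F E d) =
      algebraMap F E a * u + algebraMap F E b := by rw [hv, div_mul_cancel₀ _ hne]
  have hdet : algebraMap F E a * algebraMap F E d - algebraMap F E b * algebraMap F E c ≠ 0 := by
    have h1 := (map_ne_zero (algebraMap F E)).2 h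
    rwa [map_sub, map_mul, map_mul] at h1
  have hvu : v ∈ genDF F D {u} := by
    rw [hv]
    have hu' : u ∈ genDF F D {u} := mem_genDF D rfl
    exact div_mem (add_mem (mul_mem (IntermediateField.algebraMap_mem _ _) hu')
      (IntermediateField.algebraMap_mem _ _)) (add_mem (mul_mem (IntermediateField.algebraMap_mem _ _) hu')
      (IntermediateField.algebraMap_mem _ _))
  -- `u = (d v - b) / (a - c v)`, and the denominator times `c u + d` is the determinant.
  have hne2 : algebraMap F E a - algebraMap F E c * v ≠ 0 := by
    intro h0
    apply hdet
    linear_combination (algebraMap F E c * u + algebraMap F E d) * h0 + algebraMap F E c * hv'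
  have huv : u ∈ genDF F D {v} := by
    have hv0 : v ∈ genDF F D {v} := mem_genDF D rfl
    have : u = (algebraMap F E d * v - algebraMap F E b) /
        (algebraMap F E a - algebraMap F E c * v) := by
      rw [eq_div_iff hne2]
      linear_combination -hv'
    rw [this]
    exact div_mem (sub_mem (mul_mem (IntermediateField.algebraMap_mem _ _) hv0)
      (IntermediateField.algebraMap_mem _ _)) (sub_mem (IntermediateField.algebraMap_mem _ _)
      (mul_mem (IntermediateField.algebraMap_mem _ _) hv0))
  refine ⟨le_antisymm (genDF_le hD (by simpa using hvu)) (genDF_le hD (by simpa using huv)), ?_⟩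
  obtain ⟨Δ, hΔ⟩ := exists_isDual hu
  have hder : ∀ j, Δ j v * (algebraMap F E c * u + algebraMap F E d) =
      (algebraMap F E a - algebraMap F E c * v) * Δ j u := by
    intro j
    have := congrArg (Δ j) hv'
    simp only [Derivation.leibniz, map_add, Derivation.map_algebraMap, smul_eq_mul] at this
    linear_combination this
  have hΔu : ∀ j, Δ j u = if 0 = j then 1 else 0 := fun j => hΔ j 0
  refine diffTrans_of_dual hD hΔ hvu ?_ ?_
  · intro h0
    have := hder 0
    rw [h0, hΔu] at this
    simp at this
    exact hne2 this.symm
  · intro j hj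
    have := hder j
    rw [hΔu, if_neg (by omega), mul_zero] at this
    exact (mul_eq_zero.1 this).resolve_right hne

theorem exists_hom_of_diffTrans {F E : Type*} [Field F] [Field E] [Algebra F E]
    {δF : Derivation ℤ F F} {D : Derivation ℤ E E}
    (hD : ∀ a : F, D (algebraMap F E a) = algebraMap F E (δF a)) {u v : E}
    (hu : DiffTrans F D u) (hv : DiffTrans F D v) :
    ∃ φ : genDF F D {u} →ₐ[F] E, (∀ x, φ (derivK hD {u} x) = D (φ x)) ∧
      ∀ h, φ ⟨u, h⟩ = v := by
  have key : ∀ w : E, DiffTrans F D w → ∀ B : MvPolynomial (Unit × ℕ) F,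
      aeval (fun p : Unit × ℕ => (⇑D)^[p.2] w) B = 0 ↔ B = 0 := by
    intro w hw B
    have h1 : AlgebraicIndependent F fun p : Unit × ℕ => (⇑D)^[p.2] w :=
      AlgebraicIndependent.comp hw Prod.snd (fun p q h => Prod.ext rfl h)
    exact ⟨fun h => h1.eq_zero_of_aeval_eq_zero B h, fun h => by simp [h]⟩
  obtain ⟨φ, hc, h⟩ := exists_diffHom hD (fun _ : Unit => u) (fun _ => v)
    (fun B => (key u hu B).trans (key v hv B).symm) (S := {u}) (by simp)
  exact ⟨φ, hc, fun h' => h () h'⟩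

/-! ### Proper parametrizations -/

/-- (i) two proper parametrizations of `(C, A)` differ by a Möbius
transformation; (ii) composing a proper parametrization with a Möbius transformation
again yields a proper parametrization. -/
theorem proper_params_mobius [CharZero F]
    (δF : Derivation ℤ F F) (D : Derivation ℤ E E)
    (hD : ∀ a : F, D (algebraMap F E a) = algebraMap F E (δF a))
    (dxy : Derivation ℤ (MvPolynomial (Fin 2 × ℕ) F) (MvPolynomial (Fin 2 × ℕ) F))
    (hdxyC : ∀ a : F, dxy (C a) = C (δF a))
    (hdxyX : ∀ (i : Fin 2) (k : ℕ), dxy (X (i, k)) = X (i, k + 1))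
    (A : MvPolynomial (Fin 2 × ℕ) F) (hA : Irreducible A)
    (s : ℕ) (hs : ordIdx 0 A = (s : WithBot ℕ))
    (u : E) (hu : DiffTrans F D u) :
    ((∀ P₁ Q₁ P₂ Q₂ P₃ Q₃ P₄ Q₄ : MvPolynomial ℕ F,
        IsProperParam F D dxy A u P₁ Q₁ P₂ Q₂ →
        IsProperParam F D dxy A u P₃ Q₃ P₄ Q₄ →
        ∃ a b c d : F, a * d - b * c ≠ 0 ∧
          algebraMap F E c * u + algebraMap F E d ≠ 0 ∧
          (let v := (algebraMap F E a * u + algebraMap F E b)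
              / (algebraMap F E c * u + algebraMap F E d);
           evalD F D v Q₁ ≠ 0 ∧ evalD F D v Q₂ ≠ 0 ∧
           evalD F D u P₃ / evalD F D u Q₃ = evalD F D v P₁ / evalD F D v Q₁ ∧
           evalD F D u P₄ / evalD F D u Q₄ = evalD F D v P₂ / evalD F D v Q₂)) ∧
     (∀ (P₁ Q₁ P₂ Q₂ : MvPolynomial ℕ F) (a b c d : F),
        IsProperParam F D dxy A u P₁ Q₁ P₂ Q₂ → a * d - b * c ≠ 0 →
        (let v := (algebraMap F E a * u + algebraMap F E b)
            / (algebraMap F E c * u + algebraMap F E d);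
         algebraMap F E c * u + algebraMap F E d ≠ 0 ∧
         {B : MvPolynomial (Fin 2 × ℕ) F |
             evalD2 F D (evalD F D v P₁ / evalD F D v Q₁)
               (evalD F D v P₂ / evalD F D v Q₂) B = 0} = satSet dxy A ∧
         genDF F D {evalD F D v P₁ / evalD F D v Q₁, evalD F D v P₂ / evalD F D v Q₂}
           = genDF F D {u}))) := by
  have hne : ∀ Q : MvPolynomial ℕ F, Q ≠ 0 → evalD F D u Q ≠ 0 := fun Q hQ h =>
    hQ (AlgebraicIndependent.eq_zero_of_aeval_eq_zero hu Q h)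
  have hu' : u ∈ genDF F D {u} := mem_genDF D rfl
  -- A differential homomorphism on `F⟨u⟩` sends `P(u)/Q(u)` to `P(v)/Q(v)`.
  have hfrac : ∀ (φ : genDF F D {u} →ₐ[F] E), (∀ x, φ (derivK hD {u} x) = D (φ x)) →
      ∀ P Q : MvPolynomial ℕ F, Q ≠ 0 → evalD F D (φ ⟨u, hu'⟩) Q ≠ 0 ∧
        ∃ h : evalD F D u P / evalD F D u Q ∈ genDF F D {u},
          φ ⟨evalD F D u P / evalD F D u Q, h⟩ =
            evalD F D (φ ⟨u, hu'⟩) P / evalD F D (φ ⟨u, hu'⟩) Q := by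
    intro φ hc P Q hQ
    obtain ⟨hP', hP⟩ := map_evalD hD hc ⟨u, hu'⟩ P
    obtain ⟨hQ', hQ2⟩ := map_evalD hD hc ⟨u, hu'⟩ Q
    refine ⟨?_, div_mem hP' hQ', ?_⟩
    · rw [← hQ2]
      intro h
      exact hne Q hQ (congrArg Subtype.val ((map_eq_zero φ).1 h))
    · rw [← hQ2, ← hP]
      exact map_div₀ φ ⟨_, hP'⟩ ⟨_, hQ'⟩
  refine ⟨?_, ?_⟩
  · intro P₁ Q₁ P₂ Q₂ P₃ Q₃ P₄ Q₄ h h'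
    obtain ⟨⟨_, _, hQ₁, _, _, hQ₂, _, _, hI⟩, hgen⟩ := h
    obtain ⟨⟨_, _, hQ₃, _, _, hQ₄, _, _, hI'⟩, hgen'⟩ := h'
    obtain ⟨v, φ, hc, hφu, hφ₁, hφ₂, a, b, c, d, hdet, hden, hv⟩ :=
      exists_moebius_hom hD hu hgen hgen' (fun B => Set.ext_iff.1 (hI.trans hI'.symm) B)
    obtain ⟨hq₁, hm₁, he₁⟩ := hfrac φ hc P₁ Q₁ hQ₁
    obtain ⟨hq₂, hm₂, he₂⟩ := hfrac φ hc P₂ Q₂ hQ₂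
    rw [hφ₁] at he₁
    rw [hφ₂] at he₂
    rw [hφu, hv] at hq₁ he₁ hq₂ he₂
    exact ⟨a, b, c, d, hdet, hden, hq₁, hq₂, he₁, he₂⟩
  · intro P₁ Q₁ P₂ Q₂ a b c d h hdet v
    obtain ⟨⟨_, _, hQ₁, _, _, hQ₂, _, _, hI⟩, hgen⟩ := h
    obtain ⟨hvu, hv⟩ := moebius_genDF hD hu hdet (v := v) rfl
    obtain ⟨φ, hc, hφu⟩ := exists_hom_of_diffTrans hD hu hv
    obtain ⟨-, hm₁, he₁⟩ := hfrac φ hc P₁ Q₁ hQ₁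
    obtain ⟨-, hm₂, he₂⟩ := hfrac φ hc P₂ Q₂ hQ₂
    rw [hφu] at he₁ he₂
    refine ⟨moebius_denom_ne_zero (diffTrans_transcendental hu) hdet, ?_, ?_⟩
    -- The new point is the image of the old one under `φ`.
    · rw [← hI, ← he₁, ← he₂]
      ext B
      exact map_evalD2 hD hc _ _ B
    · rw [← he₁, ← he₂]
      apply le_antisymm
      · refine le_trans (genDF_le hD ?_) hvu.le
        have hmap : ∀ y : genDF F D {u}, φ y ∈ genDF F D {v} := by
          intro y
          refine map_mem_genDF hD hc (T := {u}) ?_ (by simpa using hu') y.2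
          rintro t h rfl
          rw [hφu]
          exact mem_genDF D rfl
        rintro t (rfl | rfl)
        · exact hmap _
        · exact hmap _
      · refine le_trans hvu.ge ?_
        refine genDF_le hD (Set.singleton_subset_iff.2 ?_)
        rw [← hφu hu']
        refine map_mem_genDF hD hc
          (T := {evalD F D u P₁ / evalD F D u Q₁, evalD F D u P₂ / evalD F D u Q₂}) ?_ ?_
          (hgen.ge hu')
        · rintro t h (rfl | rfl)
          · exact mem_genDF D (by simp)
          · exact mem_genDF D (by simp)
        · rintro t (rfl | rfl)
          · exact hm₁
          · exact hm₂

end DiffCurve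
end
end
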